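/- arXiv:math/0509469 — 4 statements merged into one kernel-verified Lean document; each statement's English description precedes it below -/
import Mathlib

section
/- For a commutative ring R, an R-module V, and alternating multilinear maps A ∈ C^a(V) (a ≥ 1) and B ∈ C^b(V), the insertion product A∘B, a priori only an (a+b−1)-multilinear map V^{a+b−1} → V, is in fact alternating, so A∘B ∈ C^{a+b−1}(V); consequently the Nijenhuis bracket [A,B] := A∘B − (−1)^{(a−1)(b−1)} B∘A lies in C^{a+b−1}(V) and satisfies the graded anticommutativity [A,B] = −(−1)^{(a−1)(b−1)}[B,A]. -/
/-!
Nijenhuis bracket on alternating multilinear cochains `C^n(V)` of an `R`-module `V`.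

We encode an `n`-ary map `(Fin n → V) → V` as a map `(ℕ → V) → V` (depending only on the
first `n` coordinates) via `ext`, so that the insertion product and the Nijenhuis bracket,
whose output arities involve `ℕ`-subtraction, can be stated uniformly.
-/

/-- Extend an `n`-ary map on `V` to a map on sequences, reading the first `n` coordinates. -/
def ext {V : Type*} {n : ℕ} (f : (Fin n → V) → V) : (ℕ → V) → V :=
  fun x => f fun i => x i

/-- The insertion product `A∘B` of an `a`-ary map `f` and a `b`-ary map `g`
(encoded as maps on sequences):
`(A∘B)(x_1,…,x_{a+b−1}) = Σ_σ sgn(σ) A(B(x_{σ(1)},…,x_{σ(b)}), x_{σ(b+1)},…,x_{σ(a+b−1)})`,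
the sum running over all permutations `σ` of `{1,…,a+b−1}` increasing on the first `b` and
on the last `a-1` positions; it is `0` when `a = 0`. -/
noncomputable def ins {V : Type*} [AddCommGroup V] (a b : ℕ) (f g : (ℕ → V) → V) :
    (ℕ → V) → V := fun x =>
  if hA : a = 0 then 0
  else
    ∑ σ ∈ Finset.univ.filter (fun σ : Equiv.Perm (Fin (a + b - 1)) =>
        (∀ i j : Fin (a + b - 1), i < j → (j : ℕ) < b → σ i < σ j) ∧
        (∀ i j : Fin (a + b - 1), i < j → b ≤ (i : ℕ) → σ i < σ j)),
      (Equiv.Perm.sign σ : ℤ) •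
        f (fun i : ℕ =>
          if i = 0 then
            g (fun k : ℕ =>
              if hk : k < b then x ((σ ⟨k, by omega⟩ : Fin (a + b - 1)) : ℕ) else 0)
          else if hi : b + i - 1 < a + b - 1 then
            x ((σ ⟨b + i - 1, hi⟩ : Fin (a + b - 1)) : ℕ)
          else 0)

/-- The Nijenhuis bracket `[A,B] := A∘B − (−1)^{(a−1)(b−1)} B∘A`. -/
noncomputable def nij {V : Type*} [AddCommGroup V] (a b : ℕ) (f g : (ℕ → V) → V) :
    (ℕ → V) → V := fun x =>
  ins a b f g x - (Int.negOnePow (((a : ℤ) - 1) * ((b : ℤ) - 1)) : ℤ) • ins b a g f x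

/-- `A` with its first argument split off, as an alternating map with values in endomorphisms. -/
noncomputable def nijFlip {R : Type*} [CommRing R] {V : Type*} [AddCommGroup V] [Module R V]
    {m : ℕ} (A : AlternatingMap R V V (Fin (m + 1))) :
    AlternatingMap R V (V →ₗ[R] V) (Fin m) where
  toFun y :=
    { toFun := fun v => A.curryLeft v y
      map_add' := by intro u v; simp only [map_add, AlternatingMap.add_apply]
      map_smul' := by intro c v; simp only [map_smul, AlternatingMap.smul_apply, RingHom.id_apply] }
  map_update_add' := by
    intro _ y i u v
    ext w
    exact (A.curryLeft w).toMultilinearMap.map_update_add' y i u v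
  map_update_smul' := by
    intro _ y i c v
    ext w
    exact (A.curryLeft w).toMultilinearMap.map_update_smul' y i c v
  map_eq_zero_of_eq' := by
    intro y i j h hij
    ext w
    exact (A.curryLeft w).map_eq_zero_of_eq y h hij

/-- The two blocks of indices. -/
def nijE (m b : ℕ) : Fin b ⊕ Fin m ≃ Fin (m + 1 + b - 1) :=
  finSumFinEquiv.trans (finCongr (by omega))

theorem nijE_inl (m b : ℕ) (i : Fin b) : ((nijE m b (Sum.inl i) : Fin _) : ℕ) = i := by
  simp [nijE]

theorem nijE_inr (m b : ℕ) (i : Fin m) : ((nijE m b (Sum.inr i) : Fin _) : ℕ) = b + i := by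
  simp [nijE]

/-- The insertion product as an alternating map. -/
noncomputable def nijIns {R : Type*} [CommRing R] {V : Type*} [AddCommGroup V] [Module R V]
    {m b : ℕ} (A : AlternatingMap R V V (Fin (m + 1))) (B : AlternatingMap R V V (Fin b)) :
    AlternatingMap R V V (Fin (m + 1 + b - 1)) :=
  ((TensorProduct.lift (LinearMap.id : (V →ₗ[R] V) →ₗ[R] (V →ₗ[R] V)).flip).compAlternatingMap
    (B.domCoprod (nijFlip A))).domDomCongr (nijE m b)

/-- shuffles -/
def NijSh (a b : ℕ) (σ : Equiv.Perm (Fin (a + b - 1))) : Prop :=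
  (∀ i j : Fin (a + b - 1), i < j → (j : ℕ) < b → σ i < σ j) ∧
    (∀ i j : Fin (a + b - 1), i < j → b ≤ (i : ℕ) → σ i < σ j)

theorem nijSh_iff (m b : ℕ) (σ : Equiv.Perm (Fin (m + 1 + b - 1))) :
    NijSh (m + 1) b σ ↔ StrictMono (fun i => σ (nijE m b (Sum.inl i))) ∧
      StrictMono (fun i => σ (nijE m b (Sum.inr i))) := by
  constructor
  · rintro ⟨h1, h2⟩
    constructor
    · intro i j hij
      apply h1
      · rw [Fin.lt_def, nijE_inl, nijE_inl]; exact hij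
      · rw [nijE_inl]; exact j.2
    · intro i j hij
      apply h2
      · rw [Fin.lt_def, nijE_inr, nijE_inr]; have : (i : ℕ) < j := hij
        omega
      · rw [nijE_inr]; omega
  · rintro ⟨h1, h2⟩
    constructor
    · intro i j hij hj
      have hij' : (i : ℕ) < j := hij
      have := @h1 ⟨i, by omega⟩ ⟨j, hj⟩ hij
      convert this using 2 <;> first | rfl | (apply Fin.ext; rw [nijE_inl])
    · intro i j hij hi
      have hij' : (i : ℕ) < j := hij
      have hi2 := i.2
      have hj2 := j.2
      have := @h2 ⟨i - b, by omega⟩ ⟨j - b, by omega⟩ (by rw [Fin.lt_def]; simp only; omega)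
      convert this using 2 <;> first | rfl | (apply Fin.ext; rw [nijE_inr]; simp only; omega)

theorem nij_sorted_eq {n : ℕ} {α : Type*} [LinearOrder α] {f g : Fin n → α}
    (hf : StrictMono f) (hg : StrictMono g) (τ : Equiv.Perm (Fin n)) (h : ∀ i, g i = f (τ i)) :
    f = g := by
  have h1 : g = f ∘ τ := funext h
  rw [h1]
  exact Tuple.unique_monotone (σ := 1) (τ := τ) (f := f) hf.monotone (h1 ▸ hg.monotone)

theorem nij_sort {n : ℕ} {α : Type*} [LinearOrder α] (f : Fin n → α)
    (hf : Function.Injective f) : ∃ τ : Equiv.Perm (Fin n), StrictMono (f ∘ τ) :=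
  ⟨Tuple.sort f, (Tuple.monotone_sort f).strictMono_of_injective
    (hf.comp (Tuple.sort f).injective)⟩

theorem nijIns_apply {R : Type*} [CommRing R] {V : Type*} [AddCommGroup V] [Module R V]
    {m b : ℕ} (A : AlternatingMap R V V (Fin (m + 1))) (B : AlternatingMap R V V (Fin b))
    (x : Fin (m + 1 + b - 1) → V) [DecidablePred (NijSh (m + 1) b)] :
    nijIns A B x = ∑ σ ∈ Finset.univ.filter (NijSh (m + 1) b),
      (Equiv.Perm.sign σ : ℤ) • A (Fin.cons (B fun i => x (σ (nijE m b (Sum.inl i))))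
        (fun i => x (σ (nijE m b (Sum.inr i))))) := by
  unfold nijIns
  rw [AlternatingMap.domDomCongr_apply, LinearMap.compAlternatingMap_apply,
    AlternatingMap.domCoprod_apply, _root_.sum_apply, map_sum]
  symm
  refine Finset.sum_bij (fun σ _ => (QuotientGroup.mk ((nijE m b).symm.permCongr σ) :
    Equiv.Perm.ModSumCongr (Fin b) (Fin m))) (fun _ _ => Finset.mem_univ _) ?_ ?_ ?_
  · intro σ hσ τ hτ h
    simp only [Finset.mem_filter, Finset.mem_univ, true_and, nijSh_iff] at hσ hτ
    rw [QuotientGroup.eq] at h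
    obtain ⟨⟨sl, sr⟩, h⟩ := h
    replace h := inv_mul_eq_iff_eq_mul.mp h.symm
    have hh : ∀ s, τ (nijE m b s) = σ (nijE m b (Sum.map sl sr s)) := by
      intro s
      have := congrArg (nijE m b) (Equiv.congr_fun h s)
      simpa using this
    have hl := nij_sorted_eq hσ.1 hτ.1 sl (fun i => hh (Sum.inl i))
    have hr := nij_sorted_eq hσ.2 hτ.2 sr (fun i => hh (Sum.inr i))
    ext k
    obtain ⟨s, rfl⟩ := (nijE m b).surjective k
    rcases s with i | i
    · exact congrArg _ (congrFun hl i)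
    · exact congrArg _ (congrFun hr i)
  · intro q _
    induction q using Quotient.inductionOn' with | _ ρ
    obtain ⟨sl, hl⟩ := nij_sort (fun i => nijE m b (ρ (Sum.inl i)))
      (fun i j h => by simpa using h)
    obtain ⟨sr, hr⟩ := nij_sort (fun i => nijE m b (ρ (Sum.inr i)))
      (fun i j h => by simpa using h)
    refine ⟨(nijE m b).permCongr (ρ * Equiv.Perm.sumCongrHom _ _ (sl, sr)), ?_, ?_⟩
    · simp only [Finset.mem_filter, Finset.mem_univ, true_and, nijSh_iff]
      constructor
      · convert hl using 2 with i
        simp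
      · convert hr using 2 with i
        simp
    · have : (nijE m b).symm.permCongr ((nijE m b).permCongr
          (ρ * Equiv.Perm.sumCongrHom _ _ (sl, sr))) = ρ * Equiv.Perm.sumCongrHom _ _ (sl, sr) := by
        ext s; simp
      rw [this]
      exact QuotientGroup.mk_mul_of_mem ρ ⟨_, rfl⟩
  · intro σ _
    have h : (QuotientGroup.mk ((nijE m b).symm.permCongr σ) :
      Equiv.Perm.ModSumCongr (Fin b) (Fin m)) = Quotient.mk'' ((nijE m b).symm.permCongr σ) := rfl
    rw [h, AlternatingMap.domCoprod.summand_mk'', _root_.smul_apply,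
      MultilinearMap.domDomCongr_apply, MultilinearMap.domCoprod_apply, Units.smul_def, map_zsmul,
      Equiv.Perm.sign_permCongr]
    congr 1
    simp [nijFlip, Matrix.vecCons]

theorem ext_nijIns {R : Type*} [CommRing R] {V : Type*} [AddCommGroup V] [Module R V]
    {m b : ℕ} (A : AlternatingMap R V V (Fin (m + 1))) (B : AlternatingMap R V V (Fin b)) :
    ext (⇑(nijIns A B)) = ins (m + 1) b (ext ⇑A) (ext ⇑B) := by
  classical
  funext x
  simp only [ext]
  rw [nijIns_apply]
  unfold ins
  rw [dif_neg (by omega)]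
  refine Finset.sum_congr (by ext σ; simp [NijSh]) ?_
  intro σ _
  congr 1
  congr 1
  funext i
  refine Fin.cases ?_ (fun i => ?_) i
  · simp only [Fin.cons_zero, Fin.val_zero, if_true]
    congr 1
    funext k
    beta_reduce
    rw [dif_pos k.2]
    congr 3
  · simp only [Fin.cons_succ, Fin.val_succ]
    rw [if_neg (by omega), dif_pos (by omega)]
    congr 3

theorem exists_ins {R : Type*} [CommRing R] {V : Type*} [AddCommGroup V] [Module R V]
    (a b n : ℕ) (hn : a = 0 ∨ n = a + b - 1)
    (A : AlternatingMap R V V (Fin a)) (B : AlternatingMap R V V (Fin b)) :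
    ∃ C : AlternatingMap R V V (Fin n), ext (⇑C) = ins a b (ext ⇑A) (ext ⇑B) := by
  rcases a with _ | m
  · exact ⟨0, by funext x; simp [ext, ins]⟩
  · obtain rfl : n = m + 1 + b - 1 := by omega
    exact ⟨nijIns A B, ext_nijIns A B⟩

/-- for alternating multilinear `A ∈ C^a(V)` (with `a ≥ 1`) and `B ∈ C^b(V)`,
the insertion product `A∘B` is again alternating multilinear, i.e. `A∘B ∈ C^{a+b-1}(V)`;
consequently the Nijenhuis bracket `[A,B]` lies in `C^{a+b-1}(V)` and satisfies the graded
anticommutativity `[A,B] = −(−1)^{(a−1)(b−1)} [B,A]`. -/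
theorem insertion_alternating_and_nij_anticomm
    {R : Type*} [CommRing R] {V : Type*} [AddCommGroup V] [Module R V]
    (a b : ℕ) (ha : 1 ≤ a)
    (A : AlternatingMap R V V (Fin a)) (B : AlternatingMap R V V (Fin b)) :
    (∃ C : AlternatingMap R V V (Fin (a + b - 1)),
        ext (⇑C) = ins a b (ext ⇑A) (ext ⇑B)) ∧
    (∃ D : AlternatingMap R V V (Fin (a + b - 1)),
        ext (⇑D) = nij a b (ext ⇑A) (ext ⇑B)) ∧
    nij a b (ext ⇑A) (ext ⇑B) = fun x =>
      -((Int.negOnePow (((a : ℤ) - 1) * ((b : ℤ) - 1)) : ℤ) •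
          nij b a (ext ⇑B) (ext ⇑A) x) := by
  have hC := exists_ins a b (a + b - 1) (Or.inr rfl) A B
  have hs : ((Int.negOnePow (((a : ℤ) - 1) * ((b : ℤ) - 1)) : ℤˣ) : ℤ) *
      (Int.negOnePow (((a : ℤ) - 1) * ((b : ℤ) - 1)) : ℤˣ) = 1 := by
    rw [← Units.val_mul, Int.units_mul_self, Units.val_one]
  refine ⟨hC, ?_, ?_⟩
  · obtain ⟨C, hC⟩ := hC
    obtain ⟨D, hD⟩ := exists_ins b a (a + b - 1) (by omega) B A
    refine ⟨C - (Int.negOnePow (((a : ℤ) - 1) * ((b : ℤ) - 1)) : ℤ) • D, ?_⟩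
    funext x
    unfold nij
    rw [← hC, ← hD]
    simp [ext]
  · funext x
    unfold nij
    rw [mul_comm ((b : ℤ) - 1) ((a : ℤ) - 1), smul_sub, smul_smul, hs, one_smul, neg_sub]
end

section
/- The Nijenhuis bracket satisfies the graded Jacobi identity: for any A ∈ C^a(V), B ∈ C^b(V), C ∈ C^c(V), one has [A,[B,C]] = [[A,B],C] + (−1)^{(a−1)(b−1)} [B,[A,C]]. Hence ⊕_n C^n(V), with A ∈ C^a(V) assigned degree a−1 (and parity a−1 mod 2), is a graded Lie (super)algebra under the Nijenhuis bracket. -/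
namespace NijAux

variable {V : Type*} [AddCommGroup V]

/-- Parity twist. -/
def eps (G : List V → V) : List V → V := fun m => (-1 : ℤ) ^ (m.length + 1) • G m

/-- Interior product. -/
def ipr (v : V) (G : List V → V) : List V → V := fun m => G (v :: m)

/-- Recursive form of the insertion product on list cochains. -/
def cmp : List V → (List V → V) → (List V → V) → V
  | [], F, G => F [G []]
  | v :: l, F, G => cmp l F (ipr v G) + cmp l (ipr v F) (eps G)

/-- The insertion product as a list cochain. -/
def co (F G : List V → V) : List V → V := fun l => cmp l F G

/-- Multiadditive and antisymmetric. -/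
def Good (F : List V → V) : Prop :=
  (∀ l u v m, F (l ++ (u + v) :: m) = F (l ++ u :: m) + F (l ++ v :: m)) ∧
  (∀ l u v m, F (l ++ u :: v :: m) = - F (l ++ v :: u :: m))

lemma Good.ipr {F : List V → V} (h : Good F) (v : V) : Good (ipr v F) :=
  ⟨fun l u w m => h.1 (v :: l) u w m, fun l u w m => h.2 (v :: l) u w m⟩

lemma Good.add {F G : List V → V} (h : Good F) (k : Good G) : Good (F + G) := by
  refine ⟨fun l u v m => ?_, fun l u v m => ?_⟩
  · simp only [Pi.add_apply, h.1, k.1]; abel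
  · simp only [Pi.add_apply]; rw [h.2, k.2]; abel

lemma Good.smul {F : List V → V} (h : Good F) (s : ℤ) : Good (s • F) := by
  refine ⟨fun l u v m => ?_, fun l u v m => ?_⟩
  · simp only [Pi.smul_apply, h.1, smul_add]
  · simp only [Pi.smul_apply]; rw [h.2, smul_neg]

lemma Good.eps {F : List V → V} (h : Good F) : Good (eps F) := by
  refine ⟨fun l u v m => ?_, fun l u v m => ?_⟩
  · simp only [NijAux.eps, h.1, smul_add, List.length_append, List.length_cons]
  · simp only [NijAux.eps, List.length_append, List.length_cons]; rw [h.2, smul_neg]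

lemma ipr_add (v : V) (F G : List V → V) : ipr v (F + G) = ipr v F + ipr v G := rfl
lemma ipr_smul (v : V) (s : ℤ) (G : List V → V) : ipr v (s • G) = s • ipr v G := rfl
lemma eps_add (F G : List V → V) : eps (F + G) = eps F + eps G := by
  funext m; simp [eps]
lemma eps_smul (s : ℤ) (G : List V → V) : eps (s • G) = s • eps G := by
  funext m; simp only [eps, Pi.smul_apply]; rw [smul_comm]
lemma eps_ipr (v : V) (G : List V → V) : eps (ipr v G) = (-1 : ℤ) • ipr v (eps G) := by
  funext m; simp only [eps, ipr, Pi.smul_apply, List.length_cons, smul_smul]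
  congr 1; ring

lemma cmp_add_left (l : List V) : ∀ F F' G : List V → V,
    cmp l (F + F') G = cmp l F G + cmp l F' G := by
  induction l with
  | nil => intro F F' G; rfl
  | cons v l ih => intro F F' G; simp only [cmp, ipr_add, ih]; abel

lemma cmp_smul_left (l : List V) (s : ℤ) : ∀ F G : List V → V,
    cmp l (s • F) G = s • cmp l F G := by
  induction l with
  | nil => intro F G; rfl
  | cons v l ih => intro F G; simp only [cmp, ipr_smul, ih, smul_add]

lemma cmp_add_right (l : List V) : ∀ F G G' : List V → V, Good F →
    cmp l F (G + G') = cmp l F G + cmp l F G' := by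
  induction l with
  | nil => intro F G G' h; exact h.1 [] _ _ []
  | cons v l ih =>
    intro F G G' h; simp only [cmp, ipr_add, eps_add]
    rw [ih _ _ _ h, ih _ _ _ (h.ipr v)]; abel

/-- Additive map packaging. -/
def cmpHom (l : List V) (F : List V → V) (h : Good F) : (List V → V) →+ V :=
  AddMonoidHom.mk' (fun G => cmp l F G) (fun G G' => cmp_add_right l F G G' h)

lemma cmp_smul_right (l : List V) (s : ℤ) (F G : List V → V) (h : Good F) :
    cmp l F (s • G) = s • cmp l F G :=
  map_zsmul (cmpHom l F h) s G

lemma cmp_zero_right (l : List V) (F : List V → V) (h : Good F) :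
    cmp l F 0 = 0 := map_zero (cmpHom l F h)

lemma Good.ipr_add' {F : List V → V} (h : Good F) (u v : V) : NijAux.ipr (u + v) F = NijAux.ipr u F + NijAux.ipr v F := by
  funext m; exact h.1 [] u v m

lemma Good.ipr_ipr {F : List V → V} (h : Good F) (u v : V) :
    NijAux.ipr u (NijAux.ipr v F) = (-1 : ℤ) • NijAux.ipr v (NijAux.ipr u F) := by
  funext m; simpa [NijAux.ipr] using h.2 [] v u m

lemma eps_eps (G : List V → V) : eps (eps G) = G := by
  funext m; simp only [eps, smul_smul, ← pow_add, ← two_mul, pow_mul]; simp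

lemma Good.co {F G : List V → V} (hF : Good F) (hG : Good G) : Good (co F G) := by
  refine ⟨fun l => ?_, fun l => ?_⟩
  · induction l generalizing F G with
    | nil =>
      intro u v m
      simp only [NijAux.co, List.nil_append, cmp, hF.ipr_add', hG.ipr_add']
      rw [cmp_add_right _ _ _ _ hF, cmp_add_left]; abel
    | cons w l ih =>
      intro u v m
      simp only [NijAux.co, List.cons_append, cmp] at ih ⊢
      rw [ih hF (hG.ipr w), ih (hF.ipr w) hG.eps]; abel
  · induction l generalizing F G with
    | nil =>
      intro u v m
      simp only [NijAux.co, List.nil_append, cmp, eps_eps, eps_ipr]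
      rw [hG.ipr_ipr v u, hF.ipr_ipr v u]
      simp only [cmp_smul_left, cmp_smul_right _ _ _ _ hF, cmp_smul_right _ _ _ _ (hF.ipr _)]
      module
    | cons w l ih =>
      intro u v m
      simp only [NijAux.co, List.cons_append, cmp] at ih ⊢
      rw [ih hF (hG.ipr w), ih (hF.ipr w) hG.eps]; abel

/-- Parity homogeneity. -/
def Hom (n : ℕ) (F : List V → V) : Prop := ∀ l, Odd (l.length + n) → F l = 0

lemma Hom.ipr {n : ℕ} {F : List V → V} (h : Hom n F) (v : V) : Hom (n + 1) (ipr v F) := by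
  intro l hl; apply h; simpa [add_assoc, add_comm, add_left_comm] using hl

lemma Hom.eps {n : ℕ} {F : List V → V} (h : Hom n F) : eps F = (-1 : ℤ) ^ (n + 1) • F := by
  funext l
  simp only [NijAux.eps, Pi.smul_apply]
  rcases Nat.even_or_odd (l.length + n) with hl | hl
  · congr 1
    rw [pow_succ, pow_succ]; congr 1
    rcases Nat.even_or_odd n with hn | hn
    · rw [hn.neg_one_pow, Even.neg_one_pow]; exact (Nat.even_add.1 hl).2 hn
    · rw [hn.neg_one_pow, Odd.neg_one_pow]
      rw [← Nat.not_even_iff_odd] at hn ⊢; rwa [Nat.even_add.1 hl]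
  · simp [h l hl]

lemma ipr_co (v : V) (F G : List V → V) :
    ipr v (co F G) = co F (ipr v G) + co (ipr v F) (eps G) := rfl

lemma eps_co (F G : List V → V) (hF : Good F) :
    eps (co F G) = co (eps F) (eps G) := by
  funext l
  induction l generalizing F G with
  | nil =>
    have h0 : F [0] = 0 := by simpa using hF.1 [] 0 0 []
    have := hF.1 [] (G []) (-(G [])) []
    simp only [List.nil_append, add_neg_cancel, h0] at this
    simp only [eps, co, cmp, List.length_nil, List.length_cons, zero_add, pow_one, one_add_one_eq_two, even_two, Even.neg_pow, one_pow, one_smul, neg_one_smul]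
    rw [neg_eq_iff_add_eq_zero, ← this]
  | cons v l ih =>
    have h1 := ih F (ipr v G) hF
    have h2 := ih (ipr v F) (eps G) (hF.ipr v)
    simp only [eps_ipr] at h1 h2
    have e0 : co (eps F) (eps G) (v :: l) = cmp l (eps F) (ipr v (eps G)) +
      cmp l (ipr v (eps F)) (eps (eps G)) := rfl
    unfold co at h1 h2
    rw [cmp_smul_right _ _ _ _ hF.eps] at h1
    rw [cmp_smul_left] at h2
    rw [e0]
    have e : eps (co F G) (v :: l) =
      - (eps (fun l => cmp l F (ipr v G)) l + eps (fun l => cmp l (ipr v F) (eps G)) l) := by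
      simp only [eps, List.length_cons, co, cmp]; rw [pow_succ]; module
    rw [e, h1, h2]; module

lemma prelie (l : List V) : ∀ (A B C : List V → V) (b c : ℕ), Good A → Good B → Good C →
    Hom b B → Hom c C →
    co (co A B) C l - co A (co B C) l =
      (-1 : ℤ) ^ ((b + 1) * (c + 1)) • (co (co A C) B l - co A (co C B) l) := by
  induction l with
  | nil =>
    intro A B C b c hA hB hC hb hc
    simp only [co, cmp, ipr, eps, List.length_nil, zero_add, pow_one, add_sub_cancel_left]
    have z : ∀ u, A [u, 0] = 0 := fun u => by
      have := hA.1 [u] 0 0 []; simpa using this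
    have z' : ∀ u, A [0, u] = 0 := fun u => by
      have := hA.1 [] 0 0 [u]; simpa using this
    have n1 : ∀ u w, A [u, (-1 : ℤ) • w] = - A [u, w] := fun u w => by
      have := hA.1 [u] w (-w) []
      simp only [List.cons_append, List.nil_append, add_neg_cancel, z] at this
      rw [neg_one_smul, eq_neg_iff_add_eq_zero, add_comm, ← this]
    rw [n1, n1]
    have hs : A [B [], C []] = - A [C [], B []] := hA.2 [] _ _ []
    rcases Nat.even_or_odd b with h | h
    · rcases Nat.even_or_odd c with h' | h'
      · rw [Odd.neg_one_pow (h.add_one.mul h'.add_one), hs]; module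
      · rw [hs, hc [] (by simpa using h')]; simp [z']
    · rw [hs, hb [] (by simpa using h)]; simp [z]
  | cons v l ih =>
    intro A B C b c hA hB hC hb hc
    have i1 := ih A B (ipr v C) b (c + 1) hA hB (hC.ipr v) hb (hc.ipr v)
    have i2 := ih A (ipr v B) C (b + 1) c hA (hB.ipr v) hC (hb.ipr v) hc
    have i3 := ih (ipr v A) B C b c (hA.ipr v) hB hC hb hc
    have step : ∀ (B C : List V → V) (b c : ℕ), Good B → Good C → Hom b B → Hom c C →
      co (co A B) C (v :: l) - co A (co B C) (v :: l) =
      (co (co A B) (ipr v C) l - co A (co B (ipr v C)) l) +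
      (-1 : ℤ) ^ (c + 1) • (co (co A (ipr v B)) C l - co A (co (ipr v B) C) l) +
      ((-1 : ℤ) ^ (b + 1) * (-1 : ℤ) ^ (c + 1)) •
        (co (co (ipr v A) B) C l - co (ipr v A) (co B C) l) := by
      intro B C b c hB hC hb hc
      have e1 : co (co A B) C (v :: l) = cmp l (co A B) (ipr v C)
        + cmp l (ipr v (co A B)) (eps C) := rfl
      have e2 : co A (co B C) (v :: l) = cmp l A (ipr v (co B C))
        + cmp l (ipr v A) (eps (co B C)) := rfl
      have s1 : ∀ (F G : List V → V) (s : ℤ), Good F → co F (s • G) = s • co F G :=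
        fun F G s h => funext fun l => cmp_smul_right l s F G h
      have s2 : ∀ (F G : List V → V) (s : ℤ), co (s • F) G = s • co F G :=
        fun F G s => funext fun l => cmp_smul_left l s F G
      rw [e1, e2, eps_co _ _ hB, ipr_co, ipr_co, hb.eps, hc.eps]
      rw [s1 _ _ _ (hA.ipr v), s2, s1 _ _ _ hB, s1 _ _ _ (hB.ipr v)]
      rw [cmp_add_right _ _ _ _ hA, cmp_add_left, cmp_smul_left]
      rw [cmp_smul_right _ _ _ _ (hA.co (hB.ipr v)), cmp_smul_right _ _ _ _ ((hA.ipr v).co hB),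
        cmp_smul_right _ _ _ _ hA, cmp_smul_right _ _ _ _ (hA.ipr v),
        cmp_smul_right _ _ _ _ (hA.ipr v)]
      simp only [co]
      module
    rw [step B C b c hB hC hb hc, step C B c b hC hB hc hb, i1, i2, i3]
    have q1 : (-1 : ℤ) ^ ((b + 1) * (c + 1 + 1)) =
      (-1 : ℤ) ^ ((b + 1) * (c + 1)) * (-1 : ℤ) ^ (b + 1) := by ring
    have q2 : (-1 : ℤ) ^ ((b + 1 + 1) * (c + 1)) =
      (-1 : ℤ) ^ ((b + 1) * (c + 1)) * (-1 : ℤ) ^ (c + 1) := by ring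
    rw [q1, q2]
    generalize (-1 : ℤ) ^ ((b + 1) * (c + 1)) = s
    rcases neg_one_pow_eq_or ℤ (b + 1) with hβ | hβ <;>
    rcases neg_one_pow_eq_or ℤ (c + 1) with hγ | hγ <;> rw [hβ, hγ] <;> module

/-- Bracket with explicit sign. -/
def br (s : ℤ) (F G : List V → V) : List V → V := co F G + (-s) • co G F

lemma Good.br {F G : List V → V} (hF : Good F) (hG : Good G) (s : ℤ) : Good (br s F G) :=
  (hF.co hG).add ((hG.co hF).smul _)

lemma jacobi (A B C : List V → V) (a b c : ℕ) (hA : Good A) (hB : Good B) (hC : Good C)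
    (ha : Hom a A) (hb : Hom b B) (hc : Hom c C) (sab sac sbc : ℤ)
    (h1 : sab = (-1) ^ ((a + 1) * (b + 1))) (h2 : sac = (-1) ^ ((a + 1) * (c + 1)))
    (h3 : sbc = (-1) ^ ((b + 1) * (c + 1))) :
    br (sab * sac) A (br sbc B C) = br (sac * sbc) (br sab A B) C +
      sab • br (sab * sbc) B (br sac A C) := by
  funext l
  have p1 := prelie l A B C b c hA hB hC hb hc
  have p2 := prelie l B A C a c hB hA hC ha hc
  have p3 := prelie l C A B a b hC hA hB ha hb
  rw [← h3] at p1
  rw [← h2] at p2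
  rw [← h1] at p3
  have e1 : ∀ (s t : ℤ) (A B C : List V → V), Good A → Good B → Good C →
      br s A (br t B C) l = co A (co B C) l - t • co A (co C B) l
      - s • (co (co B C) A l - t • co (co C B) A l) := by
    intro s t A B C hA hB hC
    simp only [br, Pi.add_apply, Pi.smul_apply]
    simp only [co]
    rw [cmp_add_right _ _ _ _ hA, cmp_add_left, cmp_smul_left, cmp_smul_right _ _ _ _ hA]
    module
  have e2 : ∀ (s t : ℤ) (A B C : List V → V), Good A → Good B → Good C →
      br s (br t A B) C l = co (co A B) C l - t • co (co B A) C l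
      - s • (co C (co A B) l - t • co C (co B A) l) := by
    intro s t A B C hA hB hC
    simp only [br, Pi.add_apply, Pi.smul_apply]
    simp only [co]
    rw [cmp_add_right _ _ _ _ hC, cmp_add_left, cmp_smul_left, cmp_smul_right _ _ _ _ hC]
    module
  rw [Pi.add_apply, Pi.smul_apply, e1 _ _ _ _ _ hA hB hC, e1 _ _ _ _ _ hB hA hC,
    e2 _ _ _ _ _ hA hB hC]
  have q1 : sab = 1 ∨ sab = -1 := h1 ▸ neg_one_pow_eq_or ℤ _
  have q2 : sac = 1 ∨ sac = -1 := h2 ▸ neg_one_pow_eq_or ℤ _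
  have q3 : sbc = 1 ∨ sbc = -1 := h3 ▸ neg_one_pow_eq_or ℤ _
  clear h1 h2 h3
  linear_combination (norm := skip) -(1 : ℤ) • p1 + sab • p2 - (sac * sbc) • p3
  rcases q1 with rfl | rfl <;> rcases q2 with rfl | rfl <;> rcases q3 with rfl | rfl <;> module

/-- Shuffle condition. -/
def Sh (n b : ℕ) (σ : Equiv.Perm (Fin n)) : Prop :=
  (∀ i j : Fin n, i < j → (j : ℕ) < b → σ i < σ j) ∧
  (∀ i j : Fin n, i < j → b ≤ (i : ℕ) → σ i < σ j)

/-- The permutation sending `p` to `0` and otherwise given by `e`. -/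
def mk {n : ℕ} (p : Fin (n + 1)) (e : Equiv.Perm (Fin n)) : Equiv.Perm (Fin (n + 1)) :=
  Equiv.Perm.decomposeFin.symm (0, e) * p.cycleRange

lemma mk_self {n : ℕ} (p : Fin (n + 1)) (e : Equiv.Perm (Fin n)) : mk p e p = 0 := by
  simp [mk]

lemma mk_succAbove {n : ℕ} (p : Fin (n + 1)) (e : Equiv.Perm (Fin n)) (j : Fin n) :
    mk p e (p.succAbove j) = (e j).succ := by
  simp [mk, Fin.cycleRange_succAbove]

lemma mk_sign {n : ℕ} (p : Fin (n + 1)) (e : Equiv.Perm (Fin n)) :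
    ((Equiv.Perm.sign (mk p e) : ℤˣ) : ℤ) = (-1) ^ (p : ℕ) * (Equiv.Perm.sign e : ℤ) := by
  simp [mk, Fin.sign_cycleRange, mul_comm]

lemma mk_bij (n : ℕ) : Function.Bijective
    (fun q : Fin (n + 1) × Equiv.Perm (Fin n) => mk q.1 q.2) := by
  rw [Fintype.bijective_iff_injective_and_card]
  constructor
  · rintro ⟨p, e⟩ ⟨q, f⟩ h
    simp only at h
    have hp : p = q := by
      apply (mk p e).injective
      rw [mk_self, h, mk_self]
    subst hp
    have : e = f := by
      ext1 j
      have := mk_succAbove p e j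
      rw [h, mk_succAbove] at this
      exact (Fin.succ_injective _ this).symm
    rw [this]
  · simp [Fintype.card_perm, Nat.factorial_succ]

lemma val_succAbove {n : ℕ} (p : Fin (n + 1)) (j : Fin n) :
    (p.succAbove j : ℕ) = if (j : ℕ) < p then (j : ℕ) else j + 1 := by
  unfold Fin.succAbove
  simp only [Fin.lt_def, Fin.val_castSucc]
  split_ifs <;> simp

lemma sh_mk {n : ℕ} (b : ℕ) (p : Fin (n + 1)) (e : Equiv.Perm (Fin n)) :
    Sh (n + 1) b (mk p e) ↔
      ((p : ℕ) = 0 ∧ 1 ≤ b ∧ Sh n (b - 1) e) ∨ ((p : ℕ) = b ∧ Sh n b e) := by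
  constructor
  · rintro ⟨h1, h2⟩
    have hmono : ∀ i j : Fin n, i < j → (p.succAbove i) < p.succAbove j :=
      fun i j h => Fin.strictMono_succAbove p h
    have k1 : ∀ i j : Fin n, i < j → (p.succAbove j : ℕ) < b → e i < e j := by
      intro i j hij hj
      have := h1 _ _ (hmono i j hij) hj
      rwa [mk_succAbove, mk_succAbove, Fin.succ_lt_succ_iff] at this
    have k2 : ∀ i j : Fin n, i < j → b ≤ (p.succAbove i : ℕ) → e i < e j := by
      intro i j hij hj
      have := h2 _ _ (hmono i j hij) hj
      rwa [mk_succAbove, mk_succAbove, Fin.succ_lt_succ_iff] at this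
    have c1 : (p : ℕ) = 0 ∨ b ≤ p := by
      by_contra! hc
      have := h1 0 p (by rw [Fin.lt_def, Fin.val_zero]; omega) hc.2
      rw [mk_self] at this
      exact absurd this (Fin.not_lt_zero _)
    have c2 : ¬ (b < (p : ℕ)) := by
      intro hc
      have := h2 ⟨b, by omega⟩ p (by rw [Fin.lt_def]; exact hc) le_rfl
      rw [mk_self] at this
      exact absurd this (Fin.not_lt_zero _)
    simp only [val_succAbove] at k1 k2
    by_cases hp : (p : ℕ) = b
    · right
      refine ⟨hp, fun i j hij hj => k1 i j hij ?_, fun i j hij hj => k2 i j hij ?_⟩ <;>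
        split_ifs <;> omega
    · left
      refine ⟨by omega, by omega, fun i j hij hj => k1 i j hij ?_,
        fun i j hij hj => k2 i j hij ?_⟩ <;> split_ifs <;> omega
  · intro h
    have key : ∀ i j : Fin (n + 1), i < j → ((j : ℕ) < b ∨ b ≤ (i : ℕ)) →
        mk p e i < mk p e j := by
      intro i j hij hb
      rcases Fin.eq_self_or_eq_succAbove p j with hj | ⟨j', hj⟩
      · exfalso
        subst hj
        rw [Fin.lt_def] at hij
        omega
      · rw [hj, mk_succAbove]
        rcases Fin.eq_self_or_eq_succAbove p i with hi | ⟨i', hi⟩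
        · rw [hi, mk_self]; exact Fin.succ_pos _
        · rw [hi, mk_succAbove, Fin.succ_lt_succ_iff]
          rw [hi, hj] at hij
          have hij' : i' < j' := (Fin.strictMono_succAbove p).lt_iff_lt.1 hij
          rw [hi, hj, val_succAbove, val_succAbove] at hb
          rcases h with ⟨hp, hb1, hs⟩ | ⟨hp, hs⟩
          · rcases hb with hb | hb
            · exact hs.1 _ _ hij' (by split_ifs at hb <;> omega)
            · exact hs.2 _ _ hij' (by split_ifs at hb <;> omega)
          · rcases hb with hb | hb
            · exact hs.1 _ _ hij' (by split_ifs at hb <;> omega)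
            · exact hs.2 _ _ hij' (by split_ifs at hb <;> omega)
    exact ⟨fun i j hij hb => key i j hij (Or.inl hb), fun i j hij hb => key i j hij (Or.inr hb)⟩

open Classical in
/-- Signed shuffle sum. -/
noncomputable def S (n b : ℕ) (Φ : List V → V) (x : Fin n → V) : V :=
  ∑ σ : Equiv.Perm (Fin n), if Sh n b σ then
    (Equiv.Perm.sign σ : ℤ) • Φ (List.ofFn (fun i => x (σ i))) else 0

lemma ofFn_mk {n : ℕ} (p : Fin (n + 1)) (e : Equiv.Perm (Fin n)) (x : Fin (n + 1) → V) :
    List.ofFn (fun i => x (mk p e i)) =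
      (List.ofFn (fun i => x (e i).succ)).take p ++ x 0 ::
        (List.ofFn (fun i => x (e i).succ)).drop p := by
  have hp := p.2
  apply List.ext_getElem
  · simp; omega
  · intro i h1 h2
    simp only [List.length_ofFn] at h1
    rw [List.getElem_ofFn]
    rcases Fin.eq_self_or_eq_succAbove p ⟨i, h1⟩ with hi | ⟨j, hi⟩
    · rw [hi, mk_self]
      have : i = p := by rw [← hi]
      subst this
      rw [List.getElem_append_right (by simp)]
      have : (p : ℕ) - min (p : ℕ) n = 0 := by omega
      simp [this]
    · rw [hi, mk_succAbove]
      have hv : i = _ := (congrArg Fin.val hi).trans (val_succAbove p j)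
      split_ifs at hv with hj
      · rw [List.getElem_append_left (by simp; omega)]
        simp [hv]
      · rw [List.getElem_append_right (by simp; omega)]
        subst hv
        rw [List.getElem_cons]
        have hl : (List.take (p : ℕ) (List.ofFn (fun i => x (e i).succ))).length = p := by
          simp; omega
        simp only [hl]
        rw [dif_neg (by omega)]
        simp only [List.getElem_drop, List.getElem_ofFn]
        congr 3
        ext; simp; omega

lemma S_succ (n b : ℕ) (hb : b ≤ n + 1) (Φ : List V → V) (x : Fin (n + 1) → V) :
    S (n + 1) b Φ x =
      (if 1 ≤ b then S n (b - 1) (fun l => Φ (x 0 :: l)) (fun i => x i.succ) else 0) +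
      (if b ≤ n then (-1 : ℤ) ^ b •
        S n b (fun l => Φ (l.take b ++ x 0 :: l.drop b)) (fun i => x i.succ) else 0) := by
  classical
  have h : S (n + 1) b Φ x = ∑ p : Fin (n + 1), ∑ e : Equiv.Perm (Fin n),
      if Sh (n + 1) b (mk p e) then ((-1) ^ (p : ℕ) * (Equiv.Perm.sign e : ℤ)) •
        Φ ((List.ofFn (fun i => x (e i).succ)).take p ++ x 0 ::
        (List.ofFn (fun i => x (e i).succ)).drop p) else 0 := by
    rw [← Fintype.sum_prod_type' (f := fun (p : Fin (n + 1)) (e : Equiv.Perm (Fin n)) =>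
      if Sh (n + 1) b (mk p e) then ((-1) ^ (p : ℕ) * (Equiv.Perm.sign e : ℤ)) •
        Φ ((List.ofFn (fun i => x (e i).succ)).take p ++ x 0 ::
        (List.ofFn (fun i => x (e i).succ)).drop p) else 0)]
    unfold S
    symm
    apply Fintype.sum_bijective _ (mk_bij n)
    rintro ⟨p, e⟩
    simp only [ofFn_mk, mk_sign]
  rw [h]
  have h2 : ∀ p : Fin (n + 1), (∑ e : Equiv.Perm (Fin n),
      if Sh (n + 1) b (mk p e) then ((-1) ^ (p : ℕ) * (Equiv.Perm.sign e : ℤ)) •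
        Φ ((List.ofFn (fun i => x (e i).succ)).take p ++ x 0 ::
        (List.ofFn (fun i => x (e i).succ)).drop p) else 0) =
      (if p = 0 then (if 1 ≤ b then S n (b - 1) (fun l => Φ (x 0 :: l)) (fun i => x i.succ)
        else 0) else 0) +
      (if (p : ℕ) = b then (-1 : ℤ) ^ b •
        S n b (fun l => Φ (l.take b ++ x 0 :: l.drop b)) (fun i => x i.succ) else 0) := by
    intro p
    by_cases hp0 : p = 0
    · subst hp0
      by_cases hb0 : b = 0
      · subst hb0
        simp [sh_mk, S]
      · have h1 : 1 ≤ b := by omega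
        have h3 : ¬ (0 = b) := by omega
        simp [sh_mk, S, h1, h3]
    · have h0 : (p : ℕ) ≠ 0 := fun h => hp0 (Fin.ext h)
      by_cases hpb : (p : ℕ) = b
      · subst hpb
        simp only [sh_mk, h0, hp0, S, Finset.smul_sum, false_and, false_or, true_and, if_true, if_false, zero_add]
        refine Finset.sum_congr rfl fun e _ => ?_
        split_ifs
        · rw [mul_smul]
        · simp
      · simp [sh_mk, h0, hp0, hpb]
  rw [Finset.sum_congr rfl (fun p _ => h2 p), Finset.sum_add_distrib]
  congr 1
  · simp
  · by_cases hbn : b ≤ n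
    · rw [if_pos hbn, Finset.sum_eq_single (⟨b, by omega⟩ : Fin (n + 1))]
      · simp
      · intro q _ hq
        rw [if_neg]
        intro h; exact hq (Fin.ext h)
      · simp
    · rw [if_neg hbn]
      refine Finset.sum_eq_zero fun p _ => if_neg (by omega)

lemma cmp_arity_zero (l : List V) : ∀ F G : List V → V, (∀ m, m.length ≠ 0 → F m = 0) →
    cmp l F G = 0 := by
  induction l with
  | nil => intro F G h; exact h _ (by simp)
  | cons v l ih =>
    intro F G h
    rw [cmp, ih F _ h, ih (ipr v F) _ (fun m _ => h _ (by simp)), add_zero]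

lemma S_congr {n b : ℕ} {Φ Ψ : List V → V} (h : ∀ l, l.length = n → Φ l = Ψ l)
    (x : Fin n → V) : S n b Φ x = S n b Ψ x := by
  unfold S
  refine Finset.sum_congr rfl fun e _ => ?_
  rw [h _ (by simp)]

lemma S_smul {n b : ℕ} {Φ : List V → V} (s : ℤ)
    (x : Fin n → V) : S n b (s • Φ) x = s • S n b Φ x := by
  unfold S
  rw [Finset.smul_sum]
  refine Finset.sum_congr rfl fun e _ => ?_
  split_ifs
  · rw [Pi.smul_apply, smul_comm]
  · simp

lemma S_eq_cmp (n : ℕ) : ∀ (a b : ℕ) (F G : List V → V), a + b = n + 1 → 1 ≤ a → Good F →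
    (∀ l, l.length ≠ a → F l = 0) → (∀ l, l.length ≠ b → G l = 0) →
    ∀ x : Fin n → V, S n b (fun l => F (G (l.take b) :: l.drop b)) x = cmp (List.ofFn x) F G := by
  induction n with
  | zero =>
    intro a b F G hab ha hF sF sG x
    have hb : b = 0 := by omega
    subst hb
    have : ∀ σ, Sh 0 0 σ := fun σ => ⟨fun i => i.elim0, fun i => i.elim0⟩
    simp [S, this, cmp]
  | succ n ih =>
    intro a b F G hab ha hF sF sG x
    rw [S_succ _ _ (by omega), List.ofFn_succ, cmp]
    congr 1
    · split_ifs with hb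
      · obtain ⟨b, rfl⟩ : ∃ b', b = b' + 1 := ⟨b - 1, by omega⟩
        rw [← ih a b F (ipr (x 0) G) (by omega) ha hF sF
          (fun l hl => sG _ (by simpa using hl))]
        rfl
      · have : ipr (x 0) G = 0 := by
          funext l; exact sG _ (by simp; omega)
        rw [this, cmp_zero_right _ _ hF]
    · split_ifs with hb
      · obtain ⟨a, rfl⟩ : ∃ a', a = a' + 1 := ⟨a - 1, by omega⟩
        have hG : eps G = (-1 : ℤ) ^ (b + 1) • G := by
          funext l
          by_cases hl : l.length = b
          · simp [eps, hl]
          · simp [eps, sG l hl]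
        rw [hG, cmp_smul_right _ _ _ _ (hF.ipr _), ← ih a b (ipr (x 0) F) G (by omega) (by omega)
          (hF.ipr _) (fun l hl => sF _ (by simpa using hl)) sG, pow_succ, mul_smul, ← S_smul (-1)]
        congr 1
        apply S_congr
        intro l hl
        simp only [Pi.smul_apply, neg_one_smul, ipr]
        have e1 : (List.take b l).length = b := by simp; omega
        rw [List.take_left' e1, List.drop_left' e1]
        exact hF.2 [] _ _ _
      · rw [cmp_arity_zero]
        intro m hm
        exact sF _ (by simp; omega)

/-- `F` represents the `n`-ary sequence map `f`. -/
def Rep (n : ℕ) (f : (ℕ → V) → V) (F : List V → V) : Prop :=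
  (∀ l, l.length ≠ n → F l = 0) ∧ ∀ x : ℕ → V, f x = F (List.ofFn (fun i : Fin n => x i))

lemma cmp_supp (l : List V) : ∀ (a b : ℕ) (F G : List V → V), Good F →
    (∀ l, l.length ≠ a → F l = 0) → (∀ l, l.length ≠ b → G l = 0) →
    l.length + 1 ≠ a + b → cmp l F G = 0 := by
  induction l with
  | nil =>
    intro a b F G hF sF sG h
    rw [cmp]
    by_cases ha : a = 1
    · rw [sG [] (by simp at h ⊢; omega)]
      simpa using hF.1 [] 0 0 []
    · exact sF _ (by simpa using Ne.symm ha)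
  | cons v l ih =>
    intro a b F G hF sF sG h
    have sE : ∀ l, l.length ≠ b → eps G l = 0 := fun l hl => by simp [eps, sG l hl]
    rw [List.length_cons] at h
    rw [cmp]
    have t1 : cmp l F (ipr v G) = 0 := by
      cases b with
      | zero =>
        have : ipr v G = 0 := by
          funext l; exact sG _ (by simp)
        rw [this, cmp_zero_right _ _ hF]
      | succ b =>
        exact ih a b _ _ hF sF (fun l hl => sG _ (by simpa using hl)) (by omega)
    have t2 : cmp l (ipr v F) (eps G) = 0 := by
      cases a with
      | zero => exact cmp_arity_zero _ _ _ (fun m _ => sF _ (by simp))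
      | succ a =>
        exact ih a b _ _ (hF.ipr v) (fun l hl => sF _ (by simpa using hl)) sE (by omega)
    rw [t1, t2, add_zero]

lemma rep_ins {a b : ℕ} {f g : (ℕ → V) → V} {F G : List V → V} (hF : Good F)
    (rF : Rep a f F) (rG : Rep b g G) : Rep (a + b - 1) (ins a b f g) (co F G) := by
  classical
  by_cases ha : a = 0
  · subst ha
    have h0 : ∀ l, cmp l F G = 0 := fun l => cmp_arity_zero l F G rF.1
    refine ⟨fun l _ => h0 l, fun x => ?_⟩
    rw [co, h0]; simp [ins]
  refine ⟨fun l hl => cmp_supp l a b F G hF rF.1 rG.1 (by omega), fun x => ?_⟩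
  rw [co, ← S_eq_cmp (a + b - 1) a b F G (by omega) (by omega) hF rF.1 rG.1]
  unfold ins S
  rw [dif_neg ha, Finset.sum_filter]
  refine Finset.sum_congr rfl fun σ _ => ?_
  by_cases hs : Sh (a + b - 1) b σ
  · rw [if_pos hs]
    unfold Sh at hs
    rw [if_pos hs]
    congr 1
    rw [rF.2, rG.2]
    congr 1
    apply List.ext_getElem
    · simp; omega
    · intro i h1 h2
      rw [List.getElem_ofFn, List.getElem_cons]
      simp only [List.length_ofFn] at h1
      by_cases hi : i = 0
      · simp only [hi, if_true, dite_true]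
        congr 1
        apply List.ext_getElem
        · simp; omega
        · intro k h3 h4
          simp only [List.length_ofFn] at h3
          simp [h3]
      · have hlt : b + i - 1 < a + b - 1 := by omega
        simp only [hi, if_false, dite_false, hlt, dite_true, List.getElem_drop, List.getElem_ofFn]
        congr 3
        ext; simp; omega
  · rw [if_neg hs]
    unfold Sh at hs
    rw [if_neg hs]

/-- the sign -/
noncomputable def sg (a b : ℕ) : ℤ := (Int.negOnePow (((a : ℤ) - 1) * ((b : ℤ) - 1)) : ℤ)

lemma sg_eq (a b : ℕ) : sg a b = (-1) ^ ((a + 1) * (b + 1)) := by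
  have : (Int.negOnePow (((a : ℤ) - 1) * ((b : ℤ) - 1))) =
      Int.negOnePow (((a + 1) * (b + 1) : ℕ) : ℤ) := by
    rw [Int.negOnePow_eq_iff]
    refine ⟨-(a + b : ℤ), ?_⟩
    push_cast; ring
  rw [sg, this]
  rw [Int.negOnePow_def, zpow_natCast]
  simp

lemma rep_nij {a b : ℕ} {f g : (ℕ → V) → V} {F G : List V → V} (hF : Good F) (hG : Good G)
    (rF : Rep a f F) (rG : Rep b g G) : Rep (a + b - 1) (nij a b f g) (br (sg a b) F G) := by
  have h1 := rep_ins hF rF rG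
  have h2 := rep_ins hG rG rF
  rw [add_comm b a] at h2
  refine ⟨fun l hl => ?_, fun x => ?_⟩
  · simp [br, h1.1 l hl, h2.1 l hl]
  · simp only [nij, br, Pi.add_apply, Pi.smul_apply]
    rw [h1.2, h2.2, neg_smul, sub_eq_add_neg]; rfl

lemma rep_sum {n N : ℕ} {f : (ℕ → V) → V} {F : List V → V} (h : Rep n f F) (hn : n < N)
    (x : ℕ → V) : f x = ∑ k ∈ Finset.range N, F (List.ofFn (fun i : Fin k => x i)) := by
  rw [h.2, Finset.sum_eq_single n]
  · intro k _ hk; exact h.1 _ (by simpa using hk)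
  · intro h'; exact absurd (Finset.mem_range.2 hn) h'

/-- list cochain of an alternating map -/
def lst {R : Type*} [CommRing R] [Module R V] {a : ℕ} (A : AlternatingMap R V V (Fin a)) :
    List V → V := fun l => if l.length = a then A (fun i => l.getD i 0) else 0

lemma rep_lst {R : Type*} [CommRing R] [Module R V] {a : ℕ} (A : AlternatingMap R V V (Fin a)) :
    Rep a (ext ⇑A) (lst A) := by
  refine ⟨fun l hl => if_neg hl, fun x => ?_⟩
  simp [ext, lst]

lemma good_lst {R : Type*} [CommRing R] [Module R V] {a : ℕ} (A : AlternatingMap R V V (Fin a)) :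
    Good (lst A) := by
  refine ⟨fun l u v m => ?_, fun l u v m => ?_⟩
  · simp only [lst, List.length_append, List.length_cons]
    split_ifs with h
    · have key : ∀ w, (fun i : Fin a => (l ++ w :: m).getD i 0) =
          Function.update (fun i : Fin a => (l ++ 0 :: m).getD i 0) ⟨l.length, by omega⟩ w := by
        intro w
        funext i
        by_cases hi : (i : ℕ) = l.length
        · have : i = ⟨l.length, by omega⟩ := Fin.ext hi
          rw [this]
          simp
        · rw [Function.update_of_ne (fun h => hi (congrArg Fin.val h))]
          simp only [List.getD_eq_getElem?_getD]
          congr 1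
          rcases lt_or_gt_of_ne hi with h' | h'
          · rw [List.getElem?_append_left h', List.getElem?_append_left h']
          · rw [List.getElem?_append_right h'.le, List.getElem?_append_right h'.le]
            obtain ⟨k, hk⟩ : ∃ k, (i : ℕ) - l.length = k + 1 := ⟨i - l.length - 1, by omega⟩
            rw [hk]; simp
      rw [key (u + v), key u, key v, AlternatingMap.map_update_add]
    · simp
  · simp only [lst, List.length_append, List.length_cons]
    split_ifs with h
    · have hne : (⟨l.length, by omega⟩ : Fin a) ≠ ⟨l.length + 1, by omega⟩ := by
        simp [Fin.ext_iff]
      rw [← AlternatingMap.map_swap A _ hne]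
      congr 1
      funext i
      simp only [Function.comp]
      by_cases hi : (i : ℕ) = l.length
      · have : i = ⟨l.length, by omega⟩ := Fin.ext hi
        rw [this, Equiv.swap_apply_left]
        simp [List.getD_eq_getElem?_getD]
      · by_cases hi' : (i : ℕ) = l.length + 1
        · have : i = ⟨l.length + 1, by omega⟩ := Fin.ext hi'
          rw [this, Equiv.swap_apply_right]
          simp [List.getD_eq_getElem?_getD]
        · rw [Equiv.swap_apply_of_ne_of_ne (fun h => hi (congrArg Fin.val h))
            (fun h => hi' (congrArg Fin.val h))]
          simp only [List.getD_eq_getElem?_getD]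
          congr 1
          rcases lt_or_gt_of_ne hi with h' | h'
          · rw [List.getElem?_append_left h', List.getElem?_append_left h']
          · rw [List.getElem?_append_right h'.le, List.getElem?_append_right h'.le]
            obtain ⟨k, hk⟩ : ∃ k, (i : ℕ) - l.length = k + 2 := ⟨i - l.length - 2, by omega⟩
            rw [hk]; simp
    · simp

lemma hom_of_rep {n : ℕ} {f : (ℕ → V) → V} {F : List V → V} (h : Rep n f F) : Hom n F := by
  intro l hl
  apply h.1
  rintro rfl
  exact absurd hl (by simp)

lemma br_zero {b c : ℕ} {B C : List V → V} (hB : ∀ l, l.length ≠ b → B l = 0)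
    (hC : ∀ l, l.length ≠ c → C l = 0) (h : b + c = 0) (s : ℤ) : br s B C = 0 := by
  obtain rfl : b = 0 := by omega
  obtain rfl : c = 0 := by omega
  funext l
  simp [br, co, cmp_arity_zero l B C hB, cmp_arity_zero l C B hC]

lemma br_zero_right (s : ℤ) {A : List V → V} (hA : Good A) : br s A 0 = 0 := by
  funext l
  have : cmp l 0 A = 0 := cmp_arity_zero l 0 A (fun _ _ => rfl)
  simp [br, co, cmp_zero_right l A hA, this]

lemma br_zero_left (s : ℤ) {A : List V → V} (hA : Good A) : br s 0 A = 0 := by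
  funext l
  have : cmp l 0 A = 0 := cmp_arity_zero l 0 A (fun _ _ => rfl)
  simp [br, co, cmp_zero_right l A hA, this]

lemma sg_right (a b c : ℕ) (h : b + c ≠ 0) : sg a (b + c - 1) = sg a b * sg a c := by
  obtain ⟨k, hk⟩ : ∃ k, b + c = k + 1 := ⟨b + c - 1, by omega⟩
  have e : (a + 1) * (b + 1) + (a + 1) * (c + 1) = (a + 1) * (k + 1) + 2 * (a + 1) := by
    have : (a + 1) * (b + 1) + (a + 1) * (c + 1) = (a + 1) * (b + c + 2) := by ring
    rw [this, hk]; ring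
  rw [sg_eq, sg_eq, sg_eq, ← pow_add, hk, e, pow_add _ _ (2 * (a + 1)), pow_mul _ 2]
  simp

lemma sg_comm (a b : ℕ) : sg a b = sg b a := by rw [sg_eq, sg_eq, mul_comm]

lemma fix_right {a b c : ℕ} {A B C : List V → V} (hA : Good A)
    (hB : ∀ l, l.length ≠ b → B l = 0) (hC : ∀ l, l.length ≠ c → C l = 0) (s : ℤ) :
    br (sg a (b + c - 1)) A (br s B C) = br (sg a b * sg a c) A (br s B C) := by
  by_cases h : b + c = 0
  · rw [br_zero hB hC h, br_zero_right _ hA, br_zero_right _ hA]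
  · rw [sg_right a b c h]

lemma fix_left {a b c : ℕ} {A B C : List V → V} (hC : Good C)
    (hA : ∀ l, l.length ≠ a → A l = 0) (hB : ∀ l, l.length ≠ b → B l = 0) (s : ℤ) :
    br (sg (a + b - 1) c) (br s A B) C = br (sg a c * sg b c) (br s A B) C := by
  by_cases h : a + b = 0
  · rw [br_zero hA hB h, br_zero_left _ hC, br_zero_left _ hC]
  · rw [sg_comm, sg_right c a b h, sg_comm c a, sg_comm c b]

end NijAux

open NijAux in

/-- the Nijenhuis bracket satisfies the graded Jacobi identity
`[A,[B,C]] = [[A,B],C] + (−1)^{(a−1)(b−1)} [B,[A,C]]` for `A ∈ C^a(V)`, `B ∈ C^b(V)`,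
`C ∈ C^c(V)`; hence `⊕_n C^n(V)`, with `C^a(V)` in degree `a−1`, is a graded Lie
superalgebra under the Nijenhuis bracket. -/
theorem nij_graded_jacobi
    {R : Type*} [CommRing R] {V : Type*} [AddCommGroup V] [Module R V]
    (a b c : ℕ)
    (A : AlternatingMap R V V (Fin a)) (B : AlternatingMap R V V (Fin b))
    (C : AlternatingMap R V V (Fin c)) :
    nij a (b + c - 1) (ext ⇑A) (nij b c (ext ⇑B) (ext ⇑C)) = fun x =>
      nij (a + b - 1) c (nij a b (ext ⇑A) (ext ⇑B)) (ext ⇑C) x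
      + (Int.negOnePow (((a : ℤ) - 1) * ((b : ℤ) - 1)) : ℤ) •
          nij b (a + c - 1) (ext ⇑B) (nij a c (ext ⇑A) (ext ⇑C)) x := by

  have gA := good_lst A
  have gB := good_lst B
  have gC := good_lst C
  have rA := rep_lst A
  have rB := rep_lst B
  have rC := rep_lst C
  have r1 := rep_nij gA (gB.br gC _) rA (rep_nij gB gC rB rC)
  have r2 := rep_nij (gA.br gB _) gC (rep_nij gA gB rA rB) rC
  have r3 := rep_nij gB (gA.br gC _) rB (rep_nij gA gC rA rC)
  rw [fix_right gA rB.1 rC.1] at r1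
  rw [fix_left gC rA.1 rB.1] at r2
  rw [fix_right gB rA.1 rC.1, sg_comm b a] at r3
  have J := jacobi (lst A) (lst B) (lst C) a b c gA gB gC (hom_of_rep rA) (hom_of_rep rB)
    (hom_of_rep rC) _ _ _ (sg_eq a b) (sg_eq a c) (sg_eq b c)
  funext x
  rw [rep_sum (N := a + b + c + 1) r1 (by omega) x, rep_sum (N := a + b + c + 1) r2 (by omega) x,
    rep_sum (N := a + b + c + 1) r3 (by omega) x, J, Finset.smul_sum, ← Finset.sum_add_distrib]
  rfl
end

section
/- Let g be a Lie algebra over a commutative ring R and let μ ∈ C^2(g) be its Lie bracket, μ(x,y) = [x,y]. Then for every A ∈ C^a(g), the Nijenhuis bracket with μ computes the Chevalley–Eilenberg coboundary of A regarded as an a-cochain of g with coefficients in the adjoint module, up to a uniform sign: [μ, A] = (−1)^{a+1} δA, where δA(x_0,…,x_a) = Σ_{i=0}^{a} (−1)^i [x_i, A(x_0,…,x̂_i,…,x_a)] + Σ_{0 ≤ i < j ≤ a} (−1)^{i+j} A([x_i,x_j], x_0,…,x̂_i,…,x̂_j,…,x_a). -/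
/-- The Chevalley–Eilenberg coboundary of an `a`-cochain of a Lie ring `L` with coefficients
in the adjoint module:
`δA(x_0,…,x_a) = Σ_i (−1)^i [x_i, A(x_0,…,x̂_i,…,x_a)]
  + Σ_{i<j} (−1)^{i+j} A([x_i,x_j], x_0,…,x̂_i,…,x̂_j,…,x_a)`. -/
noncomputable def ce {L : Type*} [LieRing L] {a : ℕ} (A : (Fin a → L) → L) :
    (Fin (a + 1) → L) → L := fun x =>
  (∑ i : Fin (a + 1), ((-1 : ℤ) ^ (i : ℕ)) • ⁅x i, A (fun j => x (i.succAbove j))⁆)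
  + ∑ i : Fin (a + 1), ∑ j : Fin (a + 1),
      if (i : ℕ) < (j : ℕ) then
        ((-1 : ℤ) ^ ((i : ℕ) + (j : ℕ))) •
          A (fun m : Fin a =>
            if hm : (m : ℕ) = 0 then ⁅x i, x j⁆
            else
              x ⟨if (m : ℕ) - 1 < (i : ℕ) then (m : ℕ) - 1
                 else if (m : ℕ) < (j : ℕ) then (m : ℕ)
                 else (m : ℕ) + 1,
                 by have := m.2; split_ifs <;> omega⟩)
      else 0

lemma ins_eq_aux {V : Type*} [AddCommGroup V] (a b N : ℕ) (ha : a ≠ 0) (hN : a + b - 1 = N)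
    (f g : (ℕ → V) → V) (x : ℕ → V) :
    ins a b f g x =
    ∑ σ ∈ Finset.univ.filter (fun σ : Equiv.Perm (Fin N) =>
        (∀ i j : Fin N, i < j → (j : ℕ) < b → σ i < σ j) ∧
        (∀ i j : Fin N, i < j → b ≤ (i : ℕ) → σ i < σ j)),
      (Equiv.Perm.sign σ : ℤ) •
        f (fun i : ℕ =>
          if i = 0 then
            g (fun k : ℕ =>
              if hk : k < b then x ((σ ⟨k, by omega⟩ : Fin N) : ℕ) else 0)
          else if hi : b + i - 1 < N then
            x ((σ ⟨b + i - 1, hi⟩ : Fin N) : ℕ)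
          else 0) := by
  subst hN
  simp only [ins, dif_neg ha]

lemma perm_eq_aux {n : ℕ} (S : Set (Fin n)) (σ τ : Equiv.Perm (Fin n))
    (hσ : StrictMonoOn σ S) (hτ : StrictMonoOn τ S) (h : ∀ i, i ∉ S → σ i = τ i) : σ = τ := by
  have him : σ '' S = τ '' S := by
    have hc : σ '' Sᶜ = τ '' Sᶜ := Set.image_congr h
    rw [Set.image_compl_eq σ.bijective, Set.image_compl_eq τ.bijective] at hc
    exact compl_injective hc
  have h1 : StrictMono (fun s : S => σ s) := fun a b hab => hσ a.2 b.2 hab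
  have h2 : StrictMono (fun s : S => τ s) := fun a b hab => hτ a.2 b.2 hab
  have h3 := (StrictMono.range_inj h1 h2).1 (by
    rw [Set.image_eq_range, Set.image_eq_range] at him
    exact him)
  ext1 i
  by_cases hi : i ∈ S
  · exact congrFun h3 ⟨i, hi⟩
  · exact h i hi

lemma cyc_val {n : ℕ} {i j : Fin n} (hij : i ≤ j) (k : Fin n) :
    (Fin.cycleIcc i j k : ℕ) =
      if (k : ℕ) < i then (k : ℕ) else if (k : ℕ) < j then k + 1
        else if (k : ℕ) = j then (i : ℕ) else k := by
  have : NeZero n := ⟨by have := k.2; omega⟩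
  split_ifs with h1 h2 h3
  · rw [Fin.cycleIcc_of_lt h1]
  · rw [Fin.cycleIcc_of_ge_of_lt (Fin.le_def.2 (by omega)) h2]
    exact Fin.val_add_one_of_lt' (by omega)
  · have : k = j := Fin.ext h3
    subst this
    rw [Fin.cycleIcc_of_last hij]
  · rw [Fin.cycleIcc_of_gt (Fin.lt_def.2 (by omega))]

lemma cyc_inv_val {n : ℕ} {i j : Fin n} (hij : i ≤ j) (k : Fin n) :
    (((Fin.cycleIcc i j)⁻¹ k : Fin n) : ℕ) =
      if (k : ℕ) < i then (k : ℕ) else if (k : ℕ) = i then (j : ℕ)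
        else if (k : ℕ) ≤ j then (k : ℕ) - 1 else k := by
  obtain ⟨m, rfl⟩ := (Fin.cycleIcc i j).surjective k
  have hinv : (Fin.cycleIcc i j)⁻¹ (Fin.cycleIcc i j m) = m :=
    (Fin.cycleIcc i j).symm_apply_apply m
  rw [hinv, cyc_val hij]
  rw [Fin.le_def] at hij
  split_ifs <;> omega

/-- The shuffle with `0 ↦ i`, `1 ↦ j`. -/
def shuf {n : ℕ} (i j : Fin (n + 2)) : Equiv.Perm (Fin (n + 2)) :=
  (Fin.cycleIcc 0 i)⁻¹ * (Fin.cycleIcc 1 j)⁻¹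

lemma shuf_val {n : ℕ} {i j : Fin (n + 2)} (hij : i < j) (k : Fin (n + 2)) :
    (shuf i j k : ℕ) = if (k : ℕ) = 0 then (i : ℕ) else if (k : ℕ) = 1 then (j : ℕ)
      else if (k : ℕ) - 2 < i then (k : ℕ) - 2 else if (k : ℕ) - 1 < j then (k : ℕ) - 1
      else k := by
  have h1 : (1 : Fin (n + 2)) ≤ j := by
    rw [Fin.lt_def] at hij
    rw [Fin.le_def, Fin.val_one]; omega
  have h2 := cyc_inv_val h1 k
  rw [shuf, Equiv.Perm.mul_apply, cyc_inv_val (Fin.zero_le i)]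
  generalize (Fin.cycleIcc 1 j)⁻¹ k = t at h2 ⊢
  rw [Fin.lt_def] at hij
  have e0 : ((0 : Fin (n + 2)) : ℕ) = 0 := rfl
  have e1 : ((1 : Fin (n + 2)) : ℕ) = 1 := Fin.val_one n
  generalize ((0 : Fin (n + 2)) : ℕ) = z at *
  generalize ((1 : Fin (n + 2)) : ℕ) = o at *
  split_ifs at h2 <;>
  split_ifs <;> omega

lemma shuf_sign {n : ℕ} {i j : Fin (n + 2)} (hij : i < j) :
    (Equiv.Perm.sign (shuf i j) : ℤ) = (-1) ^ ((i : ℕ) + j + 1) := by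
  have hij' := Fin.lt_def.1 hij
  have h1 : (1 : Fin (n + 2)) ≤ j := by
    rw [Fin.le_def, Fin.val_one]; omega
  obtain ⟨m, hm⟩ : ∃ m, (j : ℕ) = m + 1 := ⟨j - 1, by omega⟩
  rw [shuf, Equiv.Perm.sign_mul, Equiv.Perm.sign_inv, Equiv.Perm.sign_inv,
    Fin.sign_cycleIcc_of_le (Fin.zero_le i), Fin.sign_cycleIcc_of_le h1]
  simp only [Fin.val_zero, Fin.val_one, hm]
  push_cast
  simp only [Nat.sub_zero]
  ring

lemma mu_part {R : Type*} [CommRing R] {L : Type*} [LieRing L] [LieAlgebra R L]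
    (μ : AlternatingMap R L L (Fin 2)) (hμ : ∀ x y : L, μ ![x, y] = ⁅x, y⁆)
    (a : ℕ) (A : (Fin a → L) → L) (x : ℕ → L) :
    ins 2 a (ext ⇑μ) (ext A) x = ((-1 : ℤ) ^ (a + 1)) •
      ∑ i : Fin (a + 1), ((-1 : ℤ) ^ (i : ℕ)) • ⁅x i, A (fun j => x (i.succAbove j))⁆ := by
  rw [ins_eq_aux 2 a (a + 1) (by norm_num) (by omega), Finset.smul_sum]
  refine Finset.sum_bij' (fun σ _ => σ (Fin.last a)) (fun i _ => Fin.cycleIcc i (Fin.last a))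
    (fun _ _ => Finset.mem_univ _) ?_ ?_ ?_ ?_
  · intro i _
    simp only [Finset.mem_filter, Finset.mem_univ, true_and]
    constructor
    · intro p q hpq hq
      rw [Fin.lt_def] at hpq ⊢
      rw [cyc_val (Fin.le_last i), cyc_val (Fin.le_last i), Fin.val_last]
      split_ifs <;> omega
    · intro p q hpq hp
      rw [Fin.lt_def] at hpq
      omega
  · intro σ hσ
    simp only [Finset.mem_filter, Finset.mem_univ, true_and] at hσ
    refine perm_eq_aux {k | (k : ℕ) < a} _ _ ?_ ?_ ?_
    · intro p hp q hq hpq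
      simp only [Set.mem_ofPred_eq] at hp hq
      rw [Fin.lt_def] at hpq ⊢
      rw [cyc_val (Fin.le_last _), cyc_val (Fin.le_last _), Fin.val_last]
      split_ifs <;> omega
    · intro p hp q hq hpq
      exact hσ.1 p q hpq hq
    · intro p hp
      have : p = Fin.last a := Fin.ext (by
        simp only [Set.mem_ofPred_eq] at hp
        have := p.2
        rw [Fin.val_last]; omega)
      subst this
      rw [Fin.cycleIcc_of_last (Fin.le_last _)]
  · intro i _
    exact Fin.cycleIcc_of_last (Fin.le_last _)
  · intro σ hσ
    have hσ' := hσ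
    simp only [Finset.mem_filter, Finset.mem_univ, true_and] at hσ'
    have key : σ = Fin.cycleIcc (σ (Fin.last a)) (Fin.last a) := by
      refine perm_eq_aux {k | (k : ℕ) < a} _ _ ?_ ?_ ?_
      · intro p hp q hq hpq
        exact hσ'.1 p q hpq hq
      · intro p hp q hq hpq
        simp only [Set.mem_ofPred_eq] at hp hq
        rw [Fin.lt_def] at hpq ⊢
        rw [cyc_val (Fin.le_last _), cyc_val (Fin.le_last _), Fin.val_last]
        split_ifs <;> omega
      · intro p hp
        have : p = Fin.last a := Fin.ext (by
          simp only [Set.mem_ofPred_eq] at hp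
          have := p.2
          rw [Fin.val_last]; omega)
        subst this
        rw [Fin.cycleIcc_of_last (Fin.le_last _)]
    generalize σ (Fin.last a) = i at key
    subst key
    have hs : (Equiv.Perm.sign (Fin.cycleIcc i (Fin.last a)) : ℤ) = (-1) ^ a * (-1) ^ (i : ℕ) := by
      rw [Fin.sign_cycleIcc_of_le (Fin.le_last i), Fin.val_last]
      obtain ⟨m, hm⟩ : ∃ m, a = m + i := ⟨a - i, by have := i.2; omega⟩
      push_cast
      rw [← pow_add]
      have : a + (i : ℕ) = (a - i) + 2 * i := by omega
      rw [this, pow_add, pow_mul]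
      norm_num
    have hf : ∀ f : ℕ → L, ext (⇑μ) f = ⁅f 0, f 1⁆ := by
      intro f
      rw [← hμ]
      unfold ext
      congr 1
      ext k
      fin_cases k <;> rfl
    have hl : Fin.cycleIcc i (Fin.last a) ⟨a, by omega⟩ = i :=
      Fin.cycleIcc_of_last (Fin.le_last i)
    rw [hf, hs]
    simp only [if_true, one_ne_zero, if_false, Nat.add_sub_cancel, Nat.lt_succ_self, dif_pos, hl]
    rw [← lie_skew, smul_neg, pow_succ, mul_neg_one, neg_smul, mul_smul]
    congr 5
    unfold ext
    congr 1
    funext j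
    beta_reduce
    rw [dif_pos j.2]
    congr 1
    rw [cyc_val (Fin.le_last i), Fin.val_last, Fin.succAbove]
    have := j.2
    simp only [Fin.lt_def, Fin.val_castSucc]
    split_ifs <;> simp

lemma A_part {L : Type*} [LieRing L] (μ : (Fin 2 → L) → L)
    (hμ : ∀ x y : L, μ ![x, y] = ⁅x, y⁆)
    (n : ℕ) (A : (Fin (n + 1) → L) → L) (x : ℕ → L) :
    ins (n + 1) 2 (ext A) (ext μ) x =
      ∑ i : Fin (n + 2), ∑ j : Fin (n + 2),
      if (i : ℕ) < (j : ℕ) then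
        ((-1 : ℤ) ^ ((i : ℕ) + (j : ℕ) + 1)) •
          A (fun m : Fin (n + 1) =>
            if (m : ℕ) = 0 then ⁅x i, x j⁆
            else
              x (if (m : ℕ) - 1 < (i : ℕ) then (m : ℕ) - 1
                 else if (m : ℕ) < (j : ℕ) then (m : ℕ)
                 else (m : ℕ) + 1))
      else 0 := by
  have hmono : ∀ i j : Fin (n + 2), i < j →
      (∀ p q : Fin (n + 2), p < q → (q : ℕ) < 2 → shuf i j p < shuf i j q) ∧
      (∀ p q : Fin (n + 2), p < q → 2 ≤ (p : ℕ) → shuf i j p < shuf i j q) := by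
    intro i j hij
    constructor
    · intro p q hpq hq
      rw [Fin.lt_def] at hpq ⊢
      rw [shuf_val hij, shuf_val hij]
      rw [Fin.lt_def] at hij
      rw [if_pos (by omega), if_neg (by omega), if_pos (by omega)]
      exact hij
    · intro p q hpq hq
      rw [Fin.lt_def] at hpq ⊢
      rw [shuf_val hij, shuf_val hij]
      rw [Fin.lt_def] at hij
      split_ifs <;> omega
  have hs0 : ∀ i j : Fin (n + 2), i < j → shuf i j 0 = i := by
    intro i j hij
    apply Fin.ext
    rw [shuf_val hij]; simp
  have hs1 : ∀ i j : Fin (n + 2), i < j → shuf i j 1 = j := by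
    intro i j hij
    apply Fin.ext
    rw [shuf_val hij]; simp
  have huniq : ∀ σ : Equiv.Perm (Fin (n + 2)), σ 0 < σ 1 →
      (∀ i j : Fin (n + 2), i < j → 2 ≤ (i : ℕ) → σ i < σ j) → σ = shuf (σ 0) (σ 1) := by
    intro σ h01 hσ
    refine perm_eq_aux {k | 2 ≤ (k : ℕ)} _ _ ?_ ?_ ?_
    · intro p hp q hq hpq
      exact hσ p q hpq hp
    · intro p hp q hq hpq
      exact (hmono _ _ h01).2 p q hpq hp
    · intro p hp
      simp only [Set.mem_ofPred_eq, not_le] at hp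
      have : p = 0 ∨ p = 1 := by
        rcases (by omega : (p : ℕ) = 0 ∨ (p : ℕ) = 1) with h | h
        · left; exact Fin.ext (by simpa using h)
        · right; exact Fin.ext (by simpa using h)
      rcases this with rfl | rfl
      · rw [hs0 _ _ h01]
      · rw [hs1 _ _ h01]
  rw [ins_eq_aux (n + 1) 2 (n + 2) (by omega) (by omega), ← Finset.sum_product',
    ← Finset.sum_filter]
  have h01 : ∀ σ : Equiv.Perm (Fin (n + 2)),
      (∀ i j : Fin (n + 2), i < j → (j : ℕ) < 2 → σ i < σ j) → σ 0 < σ 1 := by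
    intro σ h
    exact h 0 1 (by rw [Fin.lt_def]; simp) (by simp)
  refine Finset.sum_bij' (fun σ _ => (σ 0, σ 1)) (fun p _ => shuf p.1 p.2) ?_ ?_ ?_ ?_ ?_
  · intro σ hσ
    simp only [Finset.mem_filter, Finset.mem_univ, true_and] at hσ
    simpa using h01 σ hσ.1
  · rintro ⟨i, j⟩ hp
    simp only [Finset.mem_filter, Finset.mem_product, Finset.mem_univ, true_and] at hp ⊢
    exact hmono i j hp
  · intro σ hσ
    simp only [Finset.mem_filter, Finset.mem_univ, true_and] at hσ
    exact (huniq σ (h01 σ hσ.1) hσ.2).symm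
  · rintro ⟨i, j⟩ hp
    simp only [Finset.mem_filter, Finset.mem_product, Finset.mem_univ, true_and] at hp
    exact Prod.ext (hs0 i j hp) (hs1 i j hp)
  · intro σ hσ
    simp only [Finset.mem_filter, Finset.mem_univ, true_and] at hσ
    have hlt := h01 σ hσ.1
    have key := huniq σ hlt hσ.2
    simp only
    generalize σ 0 = i at key hlt ⊢
    generalize σ 1 = j at key hlt ⊢
    subst key
    rw [shuf_sign hlt]
    congr 1
    have hf : ∀ f : ℕ → L, ext μ f = ⁅f 0, f 1⁆ := by
      intro f
      rw [← hμ]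
      unfold ext
      congr 1
      ext k
      fin_cases k <;> rfl
    rw [hf]
    unfold ext
    congr 1
    funext m
    beta_reduce
    by_cases hm : (m : ℕ) = 0
    · rw [if_pos hm, if_pos hm]
      rw [dif_pos (by norm_num), dif_pos (by norm_num)]
      rw [shuf_val hlt, shuf_val hlt]
      simp
    · rw [if_neg hm, if_neg hm, dif_pos (by have := m.2; omega)]
      congr 1
      rw [shuf_val hlt]
      simp only
      split_ifs <;> omega

/-- for a Lie algebra `g` with Lie bracket `μ ∈ C^2(g)` and any `A ∈ C^a(g)`,
the Nijenhuis bracket with `μ` is the Chevalley–Eilenberg coboundary of `A` with adjoint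
coefficients, up to a uniform sign: `[μ, A] = (−1)^{a+1} δA`. -/
theorem nij_with_bracket_eq_coboundary
    {R : Type*} [CommRing R] {L : Type*} [LieRing L] [LieAlgebra R L]
    (μ : AlternatingMap R L L (Fin 2)) (hμ : ∀ x y : L, μ ![x, y] = ⁅x, y⁆)
    (a : ℕ) (A : AlternatingMap R L L (Fin a)) :
    nij 2 a (ext ⇑μ) (ext ⇑A) = fun x =>
      ((-1 : ℤ) ^ (a + 1)) • ext (ce ⇑A) x := by
  funext x
  unfold nij
  rw [mu_part μ hμ]
  change _ = ((-1 : ℤ) ^ (a + 1)) • (ce ⇑A fun i => x i)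
  unfold ce
  rw [smul_add, sub_eq_add_neg]
  congr 1
  cases a with
  | zero => simp [ins]
  | succ n =>
    rw [A_part _ hμ]
    have hs : ((Int.negOnePow ((((2 : ℕ) : ℤ) - 1) * (((n + 1 : ℕ) : ℤ) - 1)) : ℤˣ) : ℤ)
        = (-1) ^ n := by
      have : ((((2 : ℕ) : ℤ) - 1) * (((n + 1 : ℕ) : ℤ) - 1)) = (n : ℤ) := by push_cast; ring
      rw [this, Int.negOnePow_def, zpow_natCast]
      push_cast
      rfl
    rw [hs, ← neg_smul, Finset.smul_sum, Finset.smul_sum]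
    refine Finset.sum_congr rfl fun i _ => ?_
    rw [Finset.smul_sum, Finset.smul_sum]
    refine Finset.sum_congr rfl fun j _ => ?_
    split_ifs with h
    · rw [smul_smul, smul_smul]
      congr 1
      ring
    · simp
end

section
/- Let V be a vector space over a field K of characteristic 0 and let μ ∈ C^2(V) be an alternating bilinear map with μ∘μ = 0 (equivalently, a Lie algebra structure on V). Then the operator D : C^a(V) → C^{a+1}(V) defined by D(A) := [μ, A] (Nijenhuis bracket) satisfies D∘D = 0, i.e. [μ,[μ,A]] = 0 for all A ∈ C^a(V). -/
section NijAux

variable {V : Type*} [AddCommGroup V]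

/-- Contraction. -/
def nijI (v : V) (f : List V → V) : List V → V := fun l => f (v :: l)

/-- Lie derivative (recursive). -/
def nijL (B : V →+ V →+ V) (v : V) : (List V → V) → List V → V
  | f, [] => B v (f [])
  | f, w :: l => nijL B v (nijI w f) l - f (B v w :: l)

/-- The insertion part of the Lie derivative. -/
def nijR (B : V →+ V →+ V) (v : V) : (List V → V) → List V → V
  | _, [] => 0
  | f, w :: l => nijR B v (nijI w f) l + f (B v w :: l)

/-- Chevalley-Eilenberg differential (recursive). -/
def nijD (B : V →+ V →+ V) : (List V → V) → List V → V
  | _, [] => 0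
  | f, v :: l => nijL B v f l - nijD B (nijI v f) l

def nijP (B : V →+ V →+ V) : (List V → V) → List V → V
  | _, [] => 0
  | f, v :: l => B v (f l) - nijP B (nijI v f) l

def nijQ (B : V →+ V →+ V) : (List V → V) → List V → V
  | _, [] => 0
  | f, v :: l => nijR B v f l - nijQ B (nijI v f) l

lemma nijL_eq (B : V →+ V →+ V) (v : V) (l : List V) : ∀ f, nijL B v f l = B v (f l) - nijR B v f l := by
  induction l with
  | nil => intro f; simp [nijL, nijR]
  | cons w l ih => intro f; simp only [nijL, nijR, ih, nijI]; abel

lemma nijD_eq (B : V →+ V →+ V) (l : List V) : ∀ f, nijD B f l = nijP B f l - nijQ B f l := by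
  induction l with
  | nil => intro f; simp [nijD, nijP, nijQ]
  | cons w l ih => intro f; simp only [nijD, nijP, nijQ, ih, nijL_eq]; abel

lemma nijI_add (w : V) (f g : List V → V) : nijI w (f + g) = nijI w f + nijI w g := rfl
lemma nijI_sub (w : V) (f g : List V → V) : nijI w (f - g) = nijI w f - nijI w g := rfl

lemma nijL_add (B : V →+ V →+ V) (v : V) (l : List V) : ∀ f g, nijL B v (f + g) l = nijL B v f l + nijL B v g l := by
  induction l with
  | nil => intro f g; simp [nijL]
  | cons w l ih => intro f g; simp only [nijL, ih, nijI_add, Pi.add_apply]; abel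

lemma nijL_sub (B : V →+ V →+ V) (v : V) (l : List V) : ∀ f g, nijL B v (f - g) l = nijL B v f l - nijL B v g l := by
  induction l with
  | nil => intro f g; simp [nijL]
  | cons w l ih => intro f g; simp only [nijL, ih, nijI_sub, Pi.sub_apply]; abel

lemma nijD_add (B : V →+ V →+ V) (l : List V) : ∀ f g, nijD B (f + g) l = nijD B f l + nijD B g l := by
  induction l with
  | nil => intro f g; simp [nijD]
  | cons w l ih => intro f g; simp only [nijD, ih, nijI_add, nijL_add]; abel

lemma nijD_sub (B : V →+ V →+ V) (l : List V) : ∀ f g, nijD B (f - g) l = nijD B f l - nijD B g l := by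
  induction l with
  | nil => intro f g; simp [nijD]
  | cons w l ih => intro f g; simp only [nijD, ih, nijI_sub, nijL_sub]; abel

lemma nijD_zero (B : V →+ V →+ V) (l : List V) : nijD B 0 l = 0 := by
  have := nijD_sub B l 0 0
  simpa using this

lemma nijL_zero (B : V →+ V →+ V) (v : V) (l : List V) : nijL B v 0 l = 0 := by
  have := nijL_sub B v l 0 0
  simpa using this

lemma nijD_neg (B : V →+ V →+ V) (l : List V) (f : List V → V) : nijD B (-f) l = - nijD B f l := by
  have := nijD_sub B l 0 f
  simpa [nijD_zero] using this

/-- Slotwise additivity and antisymmetry. -/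
def nijMA (f : List V → V) : Prop :=
  ∀ l₁ (u v : V) l₂, f (l₁ ++ (u + v) :: l₂) = f (l₁ ++ u :: l₂) + f (l₁ ++ v :: l₂)

def nijAS (f : List V → V) : Prop :=
  ∀ l₁ (u v : V) l₂, f (l₁ ++ u :: v :: l₂) = - f (l₁ ++ v :: u :: l₂)

lemma nijMA.I {f : List V → V} (h : nijMA f) (w : V) : nijMA (nijI w f) :=
  fun l₁ u v l₂ => h (w :: l₁) u v l₂
lemma nijAS.I {f : List V → V} (h : nijAS f) (w : V) : nijAS (nijI w f) :=
  fun l₁ u v l₂ => h (w :: l₁) u v l₂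

lemma nijMA.I_add {f : List V → V} (h : nijMA f) (u v : V) : nijI (u + v) f = nijI u f + nijI v f :=
  funext fun l => h [] u v l
lemma nijMA.I_zero {f : List V → V} (h : nijMA f) : nijI 0 f = 0 := by
  have := h.I_add 0 0
  simpa using this
lemma nijMA.I_neg {f : List V → V} (h : nijMA f) (u : V) : nijI (-u) f = - nijI u f := by
  have := h.I_add u (-u)
  rw [add_neg_cancel, h.I_zero] at this
  exact (neg_eq_of_add_eq_zero_right this.symm).symm
lemma nijAS.I_I {f : List V → V} (h : nijAS f) (u v : V) : nijI u (nijI v f) = - nijI v (nijI u f) :=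
  funext fun l => h [] v u l

lemma nijI_L (B : V →+ V →+ V) (v w : V) (f : List V → V) :
    nijI w (nijL B v f) = nijL B v (nijI w f) - nijI (B v w) f := rfl
lemma nijI_D (B : V →+ V →+ V) (v : V) (f : List V → V) :
    nijI v (nijD B f) = nijL B v f - nijD B (nijI v f) := rfl

lemma nijL_comm (B : V →+ V →+ V) (hB : ∀ u v w, B u (B v w) = B (B u v) w + B v (B u w))
    (v w : V) (l : List V) : ∀ f, nijMA f →
    nijL B v (nijL B w f) l - nijL B w (nijL B v f) l = nijL B (B v w) f l := by
  induction l with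
  | nil => intro f hf; simp only [nijL]; rw [hB v w]; abel
  | cons u l ih =>
    intro f hf
    have e := ih _ (hf.I u)
    have k := congrFun (hf.I_add (B (B v w) u) (B w (B v u))) l
    rw [← hB] at k
    simp only [nijI, Pi.add_apply] at k
    have e1 : nijL B (B v w) f (u :: l) = nijL B (B v w) (nijI u f) l - f (B (B v w) u :: l) := rfl
    have e2 : ∀ v w, nijL B v (nijL B w f) (u :: l) =
      nijL B v (nijL B w (nijI u f)) l - nijL B v (nijI (B w u) f) l
       - (nijL B w (nijI (B v u) f) l - f (B w (B v u) :: l)) := by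
      intro v w
      rw [nijL, nijI_L, nijL_sub]; rfl
    rw [e1, e2, e2, ← e, k]; abel

lemma nijL_D (B : V →+ V →+ V) (hB : ∀ u v w, B u (B v w) = B (B u v) w + B v (B u w))
    (v : V) (l : List V) : ∀ f, nijMA f →
    nijL B v (nijD B f) l + (if l = [] then 0 else 0) = nijD B (nijL B v f) l := by
  induction l with
  | nil => intro f hf; simp [nijL, nijD]
  | cons u l ih =>
    intro f hf
    have e := ih _ (hf.I u)
    have c := nijL_comm B hB v u l f hf
    simp only [ite_self, add_zero] at e ⊢
    rw [nijL, nijI_D, nijL_sub, nijD, nijD, nijI_L, nijD_sub, ← c, e]; abel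

lemma nijD_D (B : V →+ V →+ V) (hB : ∀ u v w, B u (B v w) = B (B u v) w + B v (B u w))
    (l : List V) : ∀ f, nijMA f → nijD B (nijD B f) l = 0 := by
  induction l with
  | nil => intro f hf; simp [nijD]
  | cons u l ih =>
    intro f hf
    have e := nijL_D B hB u l f hf
    simp only [ite_self, add_zero] at e
    rw [nijD, nijI_D, nijD_sub, ih _ (hf.I u), e]; abel

lemma nijL_MA (B : V →+ V →+ V) (v : V) (f : List V → V) (hf : nijMA f) : nijMA (nijL B v f) := by
  intro l₁
  induction l₁ generalizing f with
  | nil =>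
    intro u w l
    simp only [List.nil_append, nijL]
    rw [hf.I_add, nijL_add, map_add]
    have := congrFun (hf.I_add (B v u) (B v w)) l
    simp only [nijI, Pi.add_apply] at this
    rw [this]; abel
  | cons a l₁ ih =>
    intro u w l
    simp only [List.cons_append, nijL]
    rw [ih _ (hf.I a)]
    have := hf (B v a :: l₁) u w l
    simp only [List.cons_append] at this
    rw [this]; abel

lemma nijD_MA (B : V →+ V →+ V) (f : List V → V) (hf : nijMA f) : nijMA (nijD B f) := by
  intro l₁
  induction l₁ generalizing f with
  | nil =>
    intro u w l
    simp only [List.nil_append, nijD]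
    rw [hf.I_add, nijD_add]
    have : ∀ (f) (_ : nijMA f), nijL B (u + w) f l = nijL B u f l + nijL B w f l := by
      induction l with
      | nil => intro f hf; simp [nijL]
      | cons a l ih =>
        intro f hf
        simp only [nijL]
        rw [ih _ (hf.I a)]
        have := congrFun (hf.I_add (B u a) (B w a)) l
        simp only [nijI, Pi.add_apply] at this
        rw [map_add, AddMonoidHom.add_apply, this]; abel
    rw [this f hf]; abel
  | cons a l₁ ih =>
    intro u w l
    simp only [List.cons_append, nijD]
    rw [ih _ (hf.I a), nijL_MA B a f hf]; abel

lemma nijL_neg (B : V →+ V →+ V) (v : V) (l : List V) (f : List V → V) : nijL B v (-f) l = - nijL B v f l := by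
  have := nijL_sub B v l 0 f
  simpa [nijL_zero] using this

lemma nijL_AS (B : V →+ V →+ V) (v : V) (f : List V → V) (hf : nijAS f) : nijAS (nijL B v f) := by
  intro l₁
  induction l₁ generalizing f with
  | nil =>
    intro u w l
    simp only [List.nil_append, nijL]
    rw [hf.I_I, nijL_neg]
    have h1 := hf [] u (B v w) l
    have h2 := hf [] w (B v u) l
    simp only [List.nil_append] at h1 h2
    simp only [nijI]
    rw [h1, h2]; abel
  | cons a l₁ ih =>
    intro u w l
    simp only [List.cons_append, nijL]
    rw [ih _ (hf.I a)]
    have := hf (B v a :: l₁) u w l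
    simp only [List.cons_append] at this
    rw [this]; abel

lemma nijD_AS (B : V →+ V →+ V) (hB : ∀ u v, B u v = - B v u) (f : List V → V)
    (hm : nijMA f) (hf : nijAS f) : nijAS (nijD B f) := by
  intro l₁
  induction l₁ generalizing f with
  | nil =>
    intro u w l
    simp only [List.nil_append, nijD, nijL]
    rw [hf.I_I, nijD_neg, hB u w]
    have := congrFun (hm.I_neg (B w u)) l
    simp only [nijI, Pi.neg_apply] at this
    rw [this]; abel
  | cons a l₁ ih =>
    intro u w l
    simp only [List.cons_append, nijD]
    rw [ih _ (hm.I a) (hf.I a), nijL_AS B a f hf]; abel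

lemma nijP_sum (B : V →+ V →+ V) (n : ℕ) : ∀ (f : List V → V) (y : Fin (n + 1) → V),
    nijP B f (List.ofFn y) =
      ∑ i : Fin (n + 1), ((-1 : ℤ) ^ (i : ℕ)) • B (y i) (f (List.ofFn fun k => y (i.succAbove k))) := by
  induction n with
  | zero => intro f y; simp [nijP]
  | succ n ih =>
    intro f y
    rw [List.ofFn_succ, nijP, ih, Fin.sum_univ_succ (n := n + 1), sub_eq_add_neg, ← Finset.sum_neg_distrib]
    congr 1
    · simp
    · refine Finset.sum_congr rfl fun i _ => ?_
      simp [nijI, pow_succ]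

lemma nijR_sum (B : V →+ V →+ V) (v : V) (n : ℕ) : ∀ (f : List V → V) (_ : nijAS f) (y : Fin (n + 1) → V),
    nijR B v f (List.ofFn y) =
      ∑ i : Fin (n + 1), ((-1 : ℤ) ^ (i : ℕ)) • f (B v (y i) :: (List.ofFn fun k => y (i.succAbove k))) := by
  induction n with
  | zero => intro f hf y; simp [nijR]
  | succ n ih =>
    intro f hf y
    rw [List.ofFn_succ, nijR, ih _ (hf.I _), Fin.sum_univ_succ (n := n + 1), add_comm]
    congr 1
    · simp
    · refine Finset.sum_congr rfl fun i _ => ?_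
      have := hf [] (y 0) (B v (y i.succ)) (List.ofFn fun k => y (i.succAbove k).succ)
      simp only [List.nil_append] at this
      simp [nijI, pow_succ, this]

lemma nijQ_sum (B : V →+ V →+ V) (n : ℕ) : ∀ (f : List V → V) (_ : nijAS f) (y : Fin (n + 2) → V),
    nijQ B f (List.ofFn y) =
      ∑ i : Fin (n + 2), ∑ j : Fin (n + 1), if i < i.succAbove j then
       ((-1 : ℤ) ^ (i + j : ℕ)) • f (B (y i) (y (i.succAbove j)) :: (List.ofFn fun k => y (i.succAbove (j.succAbove k)))) else 0 := by
  induction n with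
  | zero => intro f hf y; simp [nijQ, nijR, Fin.sum_univ_succ]
  | succ n ih =>
    intro f hf y
    rw [List.ofFn_succ, nijQ, ih _ (hf.I _), nijR_sum _ _ _ _ hf, Fin.sum_univ_succ (n := n + 2), sub_eq_add_neg, ← Finset.sum_neg_distrib]
    congr 1
    · simp
    · refine Finset.sum_congr rfl fun i _ => ?_
      rw [Fin.sum_univ_succ (n := n + 1), ← Finset.sum_neg_distrib]
      simp only [Fin.succ_succAbove_zero, Fin.not_lt_zero, if_false, zero_add]
      refine Finset.sum_congr rfl fun j _ => ?_
      have := hf [] (y 0) (B (y i.succ) (y (i.succAbove j).succ)) (List.ofFn fun k => y (i.succAbove (j.succAbove k)).succ)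
      simp only [List.nil_append] at this
      split_ifs with h1 h2 h2
      · simp [nijI, pow_succ, pow_add, this]
      · simp at h2; exact absurd h1 (not_lt.2 h2)
      · simp at h2; exact absurd h2 h1
      · simp

end NijAux

section NijBridge

variable {V : Type*} [AddCommGroup V]

lemma ins_eq_cast (a b N : ℕ) (hN : a + b - 1 = N) (ha : a ≠ 0) (f g : (ℕ → V) → V) (x : ℕ → V) :
    ins a b f g x = ∑ σ ∈ Finset.univ.filter (fun σ : Equiv.Perm (Fin N) =>
        (∀ i j : Fin N, i < j → (j : ℕ) < b → σ i < σ j) ∧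
        (∀ i j : Fin N, i < j → b ≤ (i : ℕ) → σ i < σ j)),
      (Equiv.Perm.sign σ : ℤ) •
        f (fun i : ℕ =>
          if i = 0 then
            g (fun k : ℕ =>
              if hk : k < b then x ((σ ⟨k, by omega⟩ : Fin N) : ℕ) else 0)
          else if hi : b + i - 1 < N then
            x ((σ ⟨b + i - 1, hi⟩ : Fin N) : ℕ)
          else 0) := by
  subst hN
  simp [ins, ha]

lemma strictMono_eq_of_range_subset {n m : ℕ} (f g : Fin n → Fin m) (hf : StrictMono f)
    (hg : StrictMono g) (h : Set.range f ⊆ Set.range g) : f = g := by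
  refine (StrictMono.range_inj hf hg).1 ?_
  apply Set.eq_of_subset_of_ncard_le h
  rw [← Set.image_univ, ← Set.image_univ, Set.ncard_image_of_injective _ hf.injective,
    Set.ncard_image_of_injective _ hg.injective]

lemma rot_last (b : ℕ) (i : Fin (b + 1)) :
    (i.cycleRange.symm * finRotate (b + 1) : Equiv.Perm (Fin (b + 1))) (Fin.last b) = i := by
  simp

lemma rot_castSucc (b : ℕ) (i : Fin (b + 1)) (k : Fin b) :
    (i.cycleRange.symm * finRotate (b + 1) : Equiv.Perm (Fin (b + 1))) k.castSucc = i.succAbove k := by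
  rw [Equiv.Perm.mul_apply, finRotate_apply, Fin.coeSucc_eq_succ, Fin.cycleRange_symm_succ]

lemma shuffle_one {M : Type*} [AddCommMonoid M] (b : ℕ) (F : Equiv.Perm (Fin (b + 1)) → M) :
    ∑ σ ∈ Finset.univ.filter (fun σ : Equiv.Perm (Fin (b + 1)) =>
        (∀ i j : Fin (b + 1), i < j → (j : ℕ) < b → σ i < σ j) ∧
        (∀ i j : Fin (b + 1), i < j → b ≤ (i : ℕ) → σ i < σ j)), F σ =
    ∑ i : Fin (b + 1), F (i.cycleRange.symm * finRotate (b + 1)) := by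
  symm
  refine Finset.sum_nbij (fun i => i.cycleRange.symm * finRotate (b + 1)) ?_ ?_ ?_ (fun _ _ => rfl)
  · intro p _
    simp only [Finset.mem_filter, Finset.mem_univ, true_and]
    refine ⟨?_, fun i j hij hb => ?_⟩
    · intro i j hij hj
      obtain ⟨i, rfl⟩ := Fin.exists_castSucc_eq.2 (show i ≠ Fin.last b by
        rintro rfl; exact absurd hij (not_lt.2 (Fin.le_last _)))
      obtain ⟨j, rfl⟩ := Fin.exists_castSucc_eq.2 (show j ≠ Fin.last b by
        rintro rfl; simp at hj)
      rw [rot_castSucc, rot_castSucc]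
      exact Fin.strictMono_succAbove p (by simpa using hij)
    · have := j.2; have : (i : ℕ) < j := hij; omega
  · intro i _ j _ h
    have := congrArg (fun σ : Equiv.Perm (Fin (b + 1)) => σ (Fin.last b)) h
    simpa only [rot_last] using this
  · intro σ hσ
    simp only [Finset.coe_filter, Finset.mem_univ, true_and, Set.mem_ofPred_eq] at hσ
    refine ⟨σ (Fin.last b), by simp, ?_⟩
    have key : (fun k : Fin b => σ k.castSucc) = (σ (Fin.last b)).succAbove := by
      apply strictMono_eq_of_range_subset
      · intro i j hij
        exact hσ.1 _ _ (by simpa using hij) (by simp)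
      · exact Fin.strictMono_succAbove _
      · rw [Fin.range_succAbove]
        rintro _ ⟨k, rfl⟩
        simp only [Set.mem_compl_iff, Set.mem_singleton_iff, EmbeddingLike.apply_eq_iff_eq]
        exact Fin.castSucc_ne_last k
    refine Equiv.ext fun k => ?_
    dsimp only
    refine Fin.lastCases ?_ (fun k => ?_) k
    · rw [rot_last]
    · rw [rot_castSucc]; exact (congrFun key k).symm

/-- The permutation sending 0, 1, k+2 to i, i.succAbove j, and the rest in order. -/
def nijPerm (m : ℕ) (i : Fin (m + 2)) (j : Fin (m + 1)) : Equiv.Perm (Fin (m + 2)) :=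
  i.cycleRange.symm * Equiv.Perm.decomposeFin.symm (0, j.cycleRange.symm)

lemma nijPerm_zero (m : ℕ) (i : Fin (m + 2)) (j : Fin (m + 1)) : nijPerm m i j 0 = i := by
  simp [nijPerm]
lemma nijPerm_succ (m : ℕ) (i : Fin (m + 2)) (j : Fin (m + 1)) (k : Fin (m + 1)) :
    nijPerm m i j k.succ = i.succAbove (j.cycleRange.symm k) := by
  simp [nijPerm]
lemma nijPerm_one (m : ℕ) (i : Fin (m + 2)) (j : Fin (m + 1)) :
    nijPerm m i j 1 = i.succAbove j := by
  have := nijPerm_succ m i j 0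
  simpa using this
lemma nijPerm_succ_succ (m : ℕ) (i : Fin (m + 2)) (j : Fin (m + 1)) (k : Fin m) :
    nijPerm m i j k.succ.succ = i.succAbove (j.succAbove k) := by
  simp [nijPerm_succ]
lemma nijPerm_sign (m : ℕ) (i : Fin (m + 2)) (j : Fin (m + 1)) :
    ((Equiv.Perm.sign (nijPerm m i j) : ℤˣ) : ℤ) = (-1) ^ (i + j : ℕ) := by
  simp [nijPerm, pow_add, Equiv.Perm.decomposeFin.symm_sign]

lemma shuffle_two {M : Type*} [AddCommMonoid M] (m : ℕ) (F : Equiv.Perm (Fin (m + 2)) → M) :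
    ∑ σ ∈ Finset.univ.filter (fun σ : Equiv.Perm (Fin (m + 2)) =>
        (∀ i j : Fin (m + 2), i < j → (j : ℕ) < 2 → σ i < σ j) ∧
        (∀ i j : Fin (m + 2), i < j → 2 ≤ (i : ℕ) → σ i < σ j)), F σ =
    ∑ i : Fin (m + 2), ∑ j : Fin (m + 1), if i < i.succAbove j then F (nijPerm m i j) else 0 := by
  rw [← Finset.sum_product', Finset.univ_product_univ, ← Finset.sum_filter]
  symm
  refine Finset.sum_nbij (fun p => nijPerm m p.1 p.2) ?_ ?_ ?_ (fun _ _ => rfl)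
  · rintro ⟨p, q⟩ h
    simp only [Finset.mem_filter, Finset.mem_univ, true_and] at h ⊢
    refine ⟨fun i j hij hj => ?_, fun i j hij hi => ?_⟩
    · have hij' : (i : ℕ) < j := hij
      have h0 : i = 0 := Fin.ext (by rw [Fin.val_zero]; omega)
      have h1 : j = 1 := Fin.ext (by simp; omega)
      rw [h0, h1, nijPerm_zero, nijPerm_one]; exact h
    · have : ∀ i : Fin (m + 2), 2 ≤ (i : ℕ) → ∃ k : Fin m, i = k.succ.succ := fun i hi =>
        ⟨⟨i - 2, by omega⟩, Fin.ext (by simp; omega)⟩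
      obtain ⟨k, rfl⟩ := this i hi
      obtain ⟨l, rfl⟩ := this j (le_trans hi (le_of_lt hij))
      rw [nijPerm_succ_succ, nijPerm_succ_succ]
      apply Fin.strictMono_succAbove
      apply Fin.strictMono_succAbove
      simpa using hij
  · rintro ⟨i, j⟩ _ ⟨i', j'⟩ _ h
    dsimp only at h
    have h0 := congrArg (fun σ : Equiv.Perm (Fin (m + 2)) => σ 0) h
    have h1 := congrArg (fun σ : Equiv.Perm (Fin (m + 2)) => σ 1) h
    simp only [nijPerm_zero, nijPerm_one] at h0 h1
    subst h0
    rw [Fin.succAbove_right_injective h1]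
  · intro σ hσ
    simp only [Finset.coe_filter, Finset.mem_univ, true_and, Set.mem_ofPred_eq] at hσ
    have h01 : σ 0 < σ 1 := hσ.1 0 1 (by simp) (by simp)
    obtain ⟨j, hj⟩ := Fin.exists_succAbove_eq h01.ne'
    refine ⟨(σ 0, j), by simpa [hj] using h01, ?_⟩
    have key : (fun k : Fin m => σ k.succ.succ) = fun k => (σ 0).succAbove (j.succAbove k) := by
      apply strictMono_eq_of_range_subset
      · intro i j hij
        exact hσ.2 _ _ (by simpa using hij) (by simp)
      · exact (Fin.strictMono_succAbove _).comp (Fin.strictMono_succAbove _)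
      · rintro _ ⟨k, rfl⟩
        obtain ⟨t, ht⟩ := Fin.exists_succAbove_eq (show σ k.succ.succ ≠ σ 0 by simp)
        obtain ⟨s, hs⟩ := Fin.exists_succAbove_eq (show t ≠ j by
          rintro rfl
          rw [hj] at ht
          have := σ.injective ht
          have := congrArg Fin.val this
          simp at this)
        exact ⟨s, by simp [hs, ht]⟩
    refine Equiv.ext fun k => ?_
    dsimp only
    refine Fin.cases ?_ (fun k => ?_) k
    · rw [nijPerm_zero]
    · refine Fin.cases ?_ (fun k => ?_) k
      · have := nijPerm_one m (σ 0) j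
        rw [hj] at this
        simpa using this
      · rw [nijPerm_succ_succ]; exact (congrFun key k).symm

/-- First half of the bracket. -/
lemma ins_two_left (B : V →+ V →+ V) (m : (ℕ → V) → V) (hm : ∀ x, m x = B (x 0) (x 1))
    (b : ℕ) (g : (ℕ → V) → V) (G : List V → V)
    (hg : ∀ x, g x = G (List.ofFn fun i : Fin b => x i)) (x : ℕ → V) :
    ins 2 b m g x = ((-1 : ℤ) ^ b) • ∑ i : Fin (b + 1), ((-1 : ℤ) ^ (i : ℕ)) •
      B (G (List.ofFn fun k => x (i.succAbove k))) (x i) := by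
  rw [ins_eq_cast 2 b (b + 1) (by omega) (by omega), shuffle_one, Finset.smul_sum]
  refine Finset.sum_congr rfl fun i _ => ?_
  rw [smul_smul]
  congr 1
  · simp [mul_comm]
  · rw [hm]
    have e : ∀ h : b + 1 - 1 < b + 1, (⟨b + 1 - 1, h⟩ : Fin (b + 1)) = Fin.last b := fun h =>
      Fin.ext (by simp)
    have e' : ∀ (k : Fin b) (h : (k : ℕ) < b + 1), (⟨k, h⟩ : Fin (b + 1)) = k.castSucc := fun k h => rfl
    simp only [if_true, one_ne_zero, if_false, hg, e, rot_last, e', rot_castSucc, Fin.is_lt, dite_true]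
    simp

lemma ins_two_right (B : V →+ V →+ V) (m : (ℕ → V) → V) (hm : ∀ x, m x = B (x 0) (x 1))
    (b : ℕ) (g : (ℕ → V) → V) (G : List V → V)
    (hg : ∀ x, g x = G (List.ofFn fun i : Fin (b + 1) => x i)) (x : ℕ → V) :
    ins (b + 1) 2 g m x = ∑ i : Fin (b + 2), ∑ j : Fin (b + 1), if i < i.succAbove j then
       ((-1 : ℤ) ^ (i + j : ℕ)) • G (B (x i) (x (i.succAbove j)) ::
        (List.ofFn fun k => x (i.succAbove (j.succAbove k)))) else 0 := by
  rw [ins_eq_cast (b + 1) 2 (b + 2) (by omega) (by omega), shuffle_two]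
  refine Finset.sum_congr rfl fun i _ => Finset.sum_congr rfl fun j _ => ?_
  split_ifs with h
  · rw [nijPerm_sign, hg]
    congr 2
    rw [List.ofFn_succ]
    have e : ∀ (k : Fin b) (h : 2 + ((k : ℕ) + 1) - 1 < b + 2),
      (⟨2 + ((k : ℕ) + 1) - 1, h⟩ : Fin (b + 2)) = k.succ.succ := fun k h =>
      Fin.ext (by simp; omega)
    congr 1
    · simp [hm, nijPerm_zero, nijPerm_one]
    · congr 1
      funext k
      have h2 : 2 + ((k : ℕ) + 1) - 1 < b + 2 := by omega
      simp only [Fin.val_succ, Nat.succ_ne_zero, if_false, h2, dite_true, e, nijPerm_succ_succ]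
  · rfl

lemma nij_eq (B : V →+ V →+ V) (hB : ∀ u v, B u v = - B v u)
    (m : (ℕ → V) → V) (hm : ∀ x, m x = B (x 0) (x 1))
    (b : ℕ) (g : (ℕ → V) → V) (G : List V → V) (hG : nijAS G)
    (hg : ∀ x, g x = G (List.ofFn fun i : Fin b => x i)) (x : ℕ → V) :
    nij 2 b m g x = ((-1 : ℤ) ^ (b + 1)) • nijD B G (List.ofFn fun i : Fin (b + 1) => x i) := by
  rw [nij, ins_two_left B m hm b g G hg, nijD_eq, nijP_sum]
  have e1 : ∑ i : Fin (b + 1), ((-1 : ℤ) ^ (i : ℕ)) •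
      B (G (List.ofFn fun k => x (i.succAbove k))) (x i) = - ∑ i : Fin (b + 1), ((-1 : ℤ) ^ (i : ℕ)) •
      B (x i) (G (List.ofFn fun k => x (i.succAbove k))) := by
    rw [← Finset.sum_neg_distrib]
    refine Finset.sum_congr rfl fun i _ => ?_
    rw [hB, smul_neg]
  have e2 : ins b 2 g m x = nijQ B G (List.ofFn fun i : Fin (b + 1) => x i) := by
    cases b with
    | zero => simp [ins, nijQ, nijR]
    | succ b => rw [ins_two_right B m hm b g G hg, nijQ_sum _ _ _ hG]
  have e3 : ((Int.negOnePow ((((2 : ℕ) : ℤ) - 1) * ((b : ℤ) - 1)) : ℤˣ) : ℤ) = (-1) ^ (b + 1) := by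
    have : (((2 : ℕ) : ℤ) - 1) * ((b : ℤ) - 1) = ((b + 1 : ℕ) : ℤ) - 2 := by push_cast; ring
    rw [this, Int.negOnePow_sub, Int.negOnePow_even 2 (by decide)]
    simp only [Int.negOnePow_def, mul_one, zpow_natCast]
    simp
  rw [e1, e2, e3, smul_sub, pow_succ]
  simp

end NijBridge

section NijFinal

variable {K : Type*} [Field K] {V : Type*} [AddCommGroup V] [Module K V]

/-- The bracket as a biadditive map. -/
def nijB (μ : AlternatingMap K V V (Fin 2)) : V →+ V →+ V :=
  AddMonoidHom.mk' (fun u => AddMonoidHom.mk' (fun v => μ ![u, v]) (by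
      intro v w
      have := μ.map_update_add ![u, v] 1 v w
      have e : ∀ z, Function.update ![u, v] 1 z = ![u, z] := fun z => by
        funext i; fin_cases i <;> simp
      rwa [e, e, e] at this)) (by
    intro u w
    ext v
    have := μ.map_update_add ![u, v] 0 u w
    have e : ∀ z, Function.update ![u, v] 0 z = ![z, v] := fun z => by
      funext i; fin_cases i <;> simp
    rw [e, e, e] at this
    exact this)

lemma nijB_apply (μ : AlternatingMap K V V (Fin 2)) (u v : V) : nijB μ u v = μ ![u, v] := rfl

lemma nijB_antisymm (μ : AlternatingMap K V V (Fin 2)) (u v : V) : nijB μ u v = - nijB μ v u := by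
  have := μ.map_swap ![u, v] (show (0 : Fin 2) ≠ 1 by decide)
  rw [nijB_apply, nijB_apply, ← neg_eq_iff_eq_neg, ← this]
  congr 1
  funext i
  fin_cases i <;> simp

lemma ext_mu (μ : AlternatingMap K V V (Fin 2)) (x : ℕ → V) : ext μ x = nijB μ (x 0) (x 1) := by
  rw [nijB_apply, ext]
  congr 1
  funext i
  fin_cases i <;> simp

/-- An alternating map as a function on lists. -/
def nijOf {a : ℕ} (A : AlternatingMap K V V (Fin a)) : List V → V := fun l =>
  if l.length = a then A (fun i => l.getD i 0) else 0

lemma nijOf_ext {a : ℕ} (A : AlternatingMap K V V (Fin a)) (x : ℕ → V) :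
    ext A x = nijOf A (List.ofFn fun i : Fin a => x i) := by
  simp [nijOf, ext]

lemma nijOf_MA {a : ℕ} (A : AlternatingMap K V V (Fin a)) : nijMA (nijOf A) := by
  intro l₁ u v l₂
  by_cases h : l₁.length + (l₂.length + 1) = a
  · simp only [nijOf, List.length_append, List.length_cons, h, if_true]
    have key : ∀ w, (fun i : Fin a => (l₁ ++ w :: l₂).getD i 0) =
      Function.update (fun i : Fin a => (l₁ ++ (0 : V) :: l₂).getD i 0) ⟨l₁.length, by omega⟩ w := by
      intro w
      funext i
      by_cases hi : i = ⟨l₁.length, by omega⟩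
      · subst hi; simp
      · rw [Function.update_of_ne hi]
        have hi' : (i : ℕ) ≠ l₁.length := fun h => hi (Fin.ext h)
        rcases lt_or_gt_of_ne hi' with h' | h'
        · simp [List.getElem?_append_left, h']
        · obtain ⟨c, hc⟩ := Nat.exists_eq_add_of_lt h'
          simp [List.getElem?_append_right, hc, add_assoc]
    rw [key, key u, key v, A.map_update_add]
  · simp [nijOf, h]

lemma nijOf_AS {a : ℕ} (A : AlternatingMap K V V (Fin a)) : nijAS (nijOf A) := by
  intro l₁ u v l₂
  by_cases h : l₁.length + (l₂.length + 1 + 1) = a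
  · simp only [nijOf, List.length_append, List.length_cons, h, if_true]
    have hne : (⟨l₁.length, by omega⟩ : Fin a) ≠ ⟨l₁.length + 1, by omega⟩ := by simp
    rw [← A.map_swap _ hne]
    congr 1
    funext i
    simp only [Function.comp]
    by_cases h1 : i = ⟨l₁.length, by omega⟩
    · subst h1; simp
    by_cases h2 : i = ⟨l₁.length + 1, by omega⟩
    · subst h2; simp
    rw [Equiv.swap_apply_of_ne_of_ne h1 h2]
    have h1' : (i : ℕ) ≠ l₁.length := fun h => h1 (Fin.ext h)
    have h2' : (i : ℕ) ≠ l₁.length + 1 := fun h => h2 (Fin.ext h)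
    rcases lt_or_gt_of_ne h1' with h' | h'
    · simp [List.getElem?_append_left, h']
    · obtain ⟨c, hc⟩ := Nat.exists_eq_add_of_le (show l₁.length + 2 ≤ i by omega)
      simp [List.getElem?_append_right, hc, add_assoc, add_comm 2 c]
  · simp [nijOf, h]

lemma nijB_jacobi (μ : AlternatingMap K V V (Fin 2)) (hμ : ins 2 2 (ext ⇑μ) (ext ⇑μ) = 0)
    (u v w : V) : nijB μ u (nijB μ v w) = nijB μ (nijB μ u v) w + nijB μ v (nijB μ u w) := by
  have h := congrFun hμ (fun i => [u, v, w].getD i 0)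
  rw [ins_two_left (nijB μ) _ (ext_mu μ) 2 _ (nijOf μ) (nijOf_ext μ)] at h
  have e : ∀ u v, nijOf μ [u, v] = nijB μ u v := by
    intro u v
    have := nijOf_ext μ (fun i => [u, v].getD i 0)
    rw [ext_mu] at this
    simpa using this.symm
  simp [Fin.sum_univ_succ, Fin.succAbove, e] at h
  rw [nijB_antisymm μ u (nijB μ v w), nijB_antisymm μ v (nijB μ u w)]
  rw [neg_eq_of_add_eq_zero_right h]; abel

end NijFinal

/-- for a vector space `V` over a field `K` of characteristic 0 and an
alternating bilinear `μ ∈ C^2(V)` with `μ∘μ = 0` (i.e. a Lie algebra structure on `V`),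
the operator `D(A) := [μ, A]` (Nijenhuis bracket), `D : C^a(V) → C^{a+1}(V)`, satisfies
`D∘D = 0`: `[μ,[μ,A]] = 0` for all `A ∈ C^a(V)`. -/
theorem nij_differential_squares_to_zero
    {K : Type*} [Field K] [CharZero K] {V : Type*} [AddCommGroup V] [Module K V]
    (μ : AlternatingMap K V V (Fin 2)) (hμ : ins 2 2 (ext ⇑μ) (ext ⇑μ) = 0)
    (a : ℕ) (A : AlternatingMap K V V (Fin a)) :
    nij 2 (a + 1) (ext ⇑μ) (nij 2 a (ext ⇑μ) (ext ⇑A)) = 0 := by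
  have h1 := nij_eq (nijB μ) (nijB_antisymm μ) (ext μ) (ext_mu μ) a (ext A) (nijOf A)
    (nijOf_AS A) (nijOf_ext A)
  have hAS := nijD_AS (nijB μ) (nijB_antisymm μ) _ (nijOf_MA A) (nijOf_AS A)
  have hz := fun l => nijD_D (nijB μ) (nijB_jacobi μ hμ) l _ (nijOf_MA A)
  funext x
  rcases neg_one_pow_eq_or ℤ (a + 1) with hs | hs
  · rw [nij_eq (nijB μ) (nijB_antisymm μ) (ext μ) (ext_mu μ) (a + 1) _ (nijD (nijB μ) (nijOf A))
      hAS (fun x => by rw [h1, hs, one_smul]), hz]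
    simp
  · rw [nij_eq (nijB μ) (nijB_antisymm μ) (ext μ) (ext_mu μ) (a + 1) _ (- nijD (nijB μ) (nijOf A))
      (fun l₁ u v l₂ => by simp only [Pi.neg_apply]; rw [hAS])
      (fun x => by rw [h1, hs]; simp), nijD_neg, hz]
    simp
end
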